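/- Let n be a positive odd integer and let M = (n-1)/2 or M = n-1. Then, modulo [n]*Phi_n(q)^4, the sum S = sum_{k=0}^{M} (-1)^k [4k+1] ((q;q^2)_k^4 (q^2;q^4)_k / ((q^2;q^2)_k^4 (q^4;q^4)_k)) q^k satisfies: if n ≡ 1 (mod 4), S ≡ [n] * ((q^2;q^4)_{(n-1)/4}^2 / (q^4;q^4)_{(n-1)/4}^2) * ( 1 + [n]^2 * sum_{j=1}^{(n-1)/2} (-1)^{j+1} q^{2j-n} / [2j]^2 ); and if n ≡ 3 (mod 4), S ≡ [n]^2 q^{(1-n)/2} (q^3;q^4)_{(n-1)/2} / (q^5;q^4)_{(n-1)/2}. -/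

import Mathlib

open Finset

/-- The generator `q` of the field `ℚ(q)` of rational functions. -/
noncomputable def q : RatFunc ℚ := RatFunc.X

/-- The `q`-integer `[r] = (1 - q^r)/(1 - q)`. -/
noncomputable def qint (r : ℤ) : RatFunc ℚ := (1 - q ^ r) / (1 - q)

/-- The `q`-shifted factorial `(x; b)_m = (1-x)(1-xb)⋯(1-x b^(m-1))`. -/
noncomputable def qpoch (x b : RatFunc ℚ) (m : ℕ) : RatFunc ℚ :=
  ∏ i ∈ Finset.range m, (1 - x * b ^ i)

/-- `f ≡ g (mod P)`: `f - g = P * (r/s)` with `s` coprime to `P`. -/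
def qcong (f g : RatFunc ℚ) (P : Polynomial ℚ) : Prop :=
  ∃ r s : Polynomial ℚ, IsCoprime s P ∧
    f - g = algebraMap (Polynomial ℚ) (RatFunc ℚ) P *
      (algebraMap (Polynomial ℚ) (RatFunc ℚ) r / algebraMap (Polynomial ℚ) (RatFunc ℚ) s)

/-!
The modulus is the product of the cyclotomic polynomials `Φ_d` with `d ∣ n` and `1 < d`, each to the
first power except `Φ_n`, which occurs to the fifth. The congruence is therefore a statement about
the valuations of `ℚ(q)` at these `Φ_d`. At `Φ_d` with `d < n` both sides vanish: `q` becomes a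
primitive `d`-th root of unity, and the summands cancel in pairs under a reflection.

At `Φ_n`, replace each factor `(1 - z)⁴` of the summand, above and below the fraction bar, by
`(1 - u z + z²) (1 - v z + z²)`, and call the resulting sum `F(u, v)`, so that the sum in question
is `F(2, 2)`. For `u = qⁿ + q⁻ⁿ` it terminates and has a closed form, and this `u` differs from
`2` only by `δ = (1 - qⁿ)² / qⁿ`. Now `F(2, 2) - 2 F(u, 2) + F(u, u)` is a weighted sum of squares
of differences of order `δ`, that is, `δ²` times a sum which itself vanishes modulo `Φ_n` by the
reflection. So `F(2, 2)` agrees with `2 F(u, 2) - F(u, u)` modulo `Φ_n⁵`. The sum over `j` in the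
case `n ≡ 1 (mod 4)` is the first-order term in the expansion of the closed form in powers of `δ`.
-/

section BalancedProducts

variable {M : Type*} [CommMonoid M]

lemma prod_range_two_mul_balanced (φ : ℤ → M) (K : ℕ) :
    ∏ i ∈ range (2 * K), φ (2 * i + 1 - 2 * K) =
      ∏ j ∈ range K, φ (2 * j + 1) * φ (-(2 * j + 1)) := by
  induction K with
  | zero => simp
  | succ K ih =>
    rw [show 2 * (K + 1) = 2 * K + 1 + 1 by ring, prod_range_succ, prod_range_succ',
      prod_range_succ _ K, ← ih, mul_assoc]
    congr 1
    · refine prod_congr rfl fun i _ ↦ congrArg φ ?_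
      lia
    · rw [mul_comm]
      congr 2
      lia

lemma prod_range_two_mul_add_one_balanced (φ : ℤ → M) (K : ℕ) :
    ∏ i ∈ range (2 * K + 1), φ (i - K) =
      φ 0 * ∏ j ∈ range K, φ (j + 1) * φ (-(j + 1)) := by
  induction K with
  | zero => simp
  | succ K ih =>
    rw [show 2 * (K + 1) + 1 = 2 * K + 1 + 1 + 1 by ring, prod_range_succ, prod_range_succ',
      prod_range_succ _ K, ← mul_assoc (φ 0), ← ih, mul_assoc]
    congr 1
    · refine prod_congr rfl fun i _ ↦ congrArg φ ?_
      lia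
    · rw [mul_comm]
      congr 2
      lia

end BalancedProducts

section QuadraticSummation

variable {F : Type*} [Field F]

/-- The `q`-shifted factorial `(x; p)_k` in an arbitrary field. -/
def qPochhammer (x p : F) (k : ℕ) : F := ∏ i ∈ range k, (1 - x * p ^ i)

lemma qPochhammer_succ (x p : F) (k : ℕ) :
    qPochhammer x p (k + 1) = qPochhammer x p k * (1 - x * p ^ k) :=
  prod_range_succ ..

lemma qPochhammer_mul_one_sub (x p : F) (k : ℕ) :
    qPochhammer x p k * (1 - x * p ^ k) = (1 - x) * qPochhammer (x * p) p k := by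
  rw [← qPochhammer_succ, qPochhammer, prod_range_succ', mul_comm]
  simp only [qPochhammer, pow_zero, mul_one, pow_succ', mul_assoc]

lemma qPochhammer_ne_zero {x p : F} (h : ∀ i : ℕ, x * p ^ i ≠ 1) (k : ℕ) :
    qPochhammer x p k ≠ 0 :=
  prod_ne_zero_iff.mpr fun i _ ↦ sub_ne_zero.mpr (h i).symm

/-- The quadratic `1 - v z + p z²`, whose values at `z = pⁱ` and `z = a pⁱ` are the factors carrying
the free parameter `v` in the summation formula `sum_quadTerm`. -/
def quadFactor (p v z : F) : F := 1 - v * z + p * z ^ 2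

/-- The `k`-th term of the terminating very-well-poised sum `sum_quadTerm`. The factors in `v` are
cleared of denominators by multiplying with `∏ i < N, quadFactor p v (a pⁱ)`, so that the formula is
polynomial in `v`. -/
def quadTerm (p a v : F) (N k : ℕ) : F :=
  (1 - a * (p ^ k) ^ 2) * qPochhammer (a ^ 2) (p ^ 2) k / qPochhammer (p ^ 2) (p ^ 2) k
    * (qPochhammer (1 / p ^ N) p k * qPochhammer (p ^ (N + 1)) p k
      / (qPochhammer (a * p ^ (N + 1)) p k * qPochhammer (a / p ^ N) p k))
    * (-a) ^ k * (∏ i ∈ range k, quadFactor p v (p ^ i))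
    * ∏ i ∈ Ico k N, quadFactor p v (a * p ^ i)

/-- The part that `quadTerm p (a * p) v (N + 1) k` and `quadTerm p a v N k` have in common, up to
the factors in `v` of index at least `k`. -/
def quadBase (p a v : F) (N k : ℕ) : F :=
  qPochhammer (a ^ 2) (p ^ 2) k / qPochhammer (p ^ 2) (p ^ 2) k
    * (qPochhammer (1 / p ^ (N + 1)) p k * qPochhammer (p * p ^ (N + 1)) p k
      / (qPochhammer (a * p ^ 2 * p ^ (N + 1)) p k * qPochhammer (a / p ^ N) p k))
    * (-a) ^ k * ∏ i ∈ range k, quadFactor p v (p ^ i)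

/-- The Wilf–Zeilberger certificate for the recurrence `sum_quadTerm_succ`. -/
def quadCert (p a v : F) (N k : ℕ) : F :=
  -((1 - (p ^ k) ^ 2) * (1 - a ^ 2 * p ^ (N + 1) * p ^ k) * (p ^ (N + 1) - a * p ^ k)
      * (1 - a * p * p ^ (N + 1) * p ^ k) / (1 - p ^ (N + 1) * p ^ k))
    * (quadBase p a v N k * ∏ i ∈ Ico k (N + 1), quadFactor p v (a * p ^ i))

lemma quadTerm_shift_prefactor (p a : F) (k : ℕ) :
    (1 - a) * (1 + a) * qPochhammer ((a * p) ^ 2) (p ^ 2) k =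
      qPochhammer (a ^ 2) (p ^ 2) k * (1 - a ^ 2 * (p ^ k) ^ 2) := by
  have h := qPochhammer_mul_one_sub (a ^ 2) (p ^ 2) k
  rw [pow_right_comm] at h
  rw [h, mul_pow]
  ring

lemma quadTerm_shift {p : F} (hp : p ≠ 0) (a v : F) (N k : ℕ) :
    (1 - a) * (1 + a) * quadTerm p (a * p) v (N + 1) k =
      (1 - a * p * (p ^ k) ^ 2) * (1 - a ^ 2 * (p ^ k) ^ 2) * p ^ k
        * (quadBase p a v N k * ∏ i ∈ Ico (k + 1) (N + 2), quadFactor p v (a * p ^ i)) := by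
  have hprod : ∏ i ∈ Ico k (N + 1), quadFactor p v (a * p * p ^ i) =
      ∏ i ∈ Ico (k + 1) (N + 2), quadFactor p v (a * p ^ i) := by
    rw [← prod_Ico_add' (fun i ↦ quadFactor p v (a * p ^ i)) k (N + 1) 1]
    simp only [pow_succ', mul_assoc]
  have hdiv : a * p / p ^ (N + 1) = a / p ^ N := by
    rw [pow_succ, mul_div_mul_right _ _ hp]
  rw [quadTerm, hprod, hdiv, quadBase, pow_succ' p (N + 1),
    show a * p * (p * p ^ (N + 1)) = a * p ^ 2 * p ^ (N + 1) by ring,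
    show -(a * p) = -a * p by ring, mul_pow (-a)]
  linear_combination (qPochhammer (1 / p ^ (N + 1)) p k * qPochhammer (p * p ^ (N + 1)) p k
      / (qPochhammer (a * p ^ 2 * p ^ (N + 1)) p k * qPochhammer (a / p ^ N) p k)
      * (1 - a * p * (p ^ k) ^ 2) / qPochhammer (p ^ 2) (p ^ 2) k * (-a) ^ k * p ^ k
      * (∏ i ∈ range k, quadFactor p v (p ^ i))
      * ∏ i ∈ Ico (k + 1) (N + 2), quadFactor p v (a * p ^ i)) * quadTerm_shift_prefactor p a k

lemma quadTerm_num_eq {p : F} (hp : p ≠ 0) (hp1 : ∀ m : ℕ, 0 < m → p ^ m ≠ 1) (N k : ℕ) :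
    (1 - p ^ (N + 1) * p ^ k)
        * (qPochhammer (1 / p ^ N) p k * qPochhammer (p ^ (N + 1)) p k) =
      -(p ^ (N + 1) - p ^ k)
        * (qPochhammer (1 / p ^ (N + 1)) p k * qPochhammer (p * p ^ (N + 1)) p k) := by
  have hP : p ^ (N + 1) ≠ 0 := pow_ne_zero _ hp
  have hshift₁ := qPochhammer_mul_one_sub (1 / p ^ (N + 1)) p k
  have hshift₂ := qPochhammer_mul_one_sub (p ^ (N + 1)) p k
  rw [show 1 / p ^ (N + 1) * p = 1 / p ^ N by rw [pow_succ]; field_simp] at hshift₁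
  rw [mul_comm _ p] at hshift₂
  have hinv : p ^ (N + 1) * (1 / p ^ (N + 1)) = 1 := mul_one_div_cancel hP
  refine mul_left_cancel₀ (sub_ne_zero.mpr (hp1 (N + 1) N.succ_pos)) ?_
  generalize p ^ (N + 1) = Q at *
  linear_combination (Q - p ^ k) * qPochhammer (1 / Q) p k * hshift₂
    - Q * qPochhammer Q p k * (1 - Q * p ^ k) * hshift₁
    + qPochhammer Q p k * (1 - Q * p ^ k)
      * (qPochhammer (1 / p ^ N) p k - qPochhammer (1 / Q) p k * p ^ k) * hinv

lemma quadTerm_den_eq (p a : F) (N k : ℕ) :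
    (1 - a * p ^ (N + 1)) * (1 - a * p * p ^ (N + 1))
        * qPochhammer (a * p ^ 2 * p ^ (N + 1)) p k =
      qPochhammer (a * p ^ (N + 1)) p k
        * ((1 - a * p ^ (N + 1) * p ^ k) * (1 - a * p * p ^ (N + 1) * p ^ k)) := by
  have hshift₁ := qPochhammer_mul_one_sub (a * p ^ (N + 1)) p k
  have hshift₂ := qPochhammer_mul_one_sub (a * p * p ^ (N + 1)) p k
  rw [mul_right_comm a _ p] at hshift₁
  rw [show a * p * p ^ (N + 1) * p = a * p ^ 2 * p ^ (N + 1) by ring] at hshift₂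
  linear_combination -(1 - a * p ^ (N + 1)) * hshift₂
    - (1 - a * p * p ^ (N + 1) * p ^ k) * hshift₁

lemma quadTerm_eq_quadBase {p a : F} (hp : p ≠ 0) (hp1 : ∀ m : ℕ, 0 < m → p ^ m ≠ 1)
    (ha : ∀ m : ℕ, a * p ^ m ≠ 1) (v : F) {N k : ℕ} (hk : k ≤ N) :
    (1 - p ^ (N + 1) * p ^ k) * (1 - a * p ^ (N + 1)) * (1 - a * p * p ^ (N + 1))
        * (quadFactor p v (a * p ^ N) * quadTerm p a v N k) =
      -((1 - a * (p ^ k) ^ 2) * (p ^ (N + 1) - p ^ k) * (1 - a * p ^ (N + 1) * p ^ k)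
        * (1 - a * p * p ^ (N + 1) * p ^ k))
        * (quadBase p a v N k * ∏ i ∈ Ico k (N + 1), quadFactor p v (a * p ^ i)) := by
  have hne₁ : qPochhammer (a * p ^ (N + 1)) p k ≠ 0 := qPochhammer_ne_zero (fun i ↦ by
    simpa only [pow_add, mul_assoc] using ha (N + 1 + i)) k
  have hne₂ : qPochhammer (a * p ^ 2 * p ^ (N + 1)) p k ≠ 0 := qPochhammer_ne_zero (fun i ↦ by
    simpa only [pow_add, mul_assoc] using ha (2 + (N + 1 + i))) k
  have hprod : quadFactor p v (a * p ^ N) * ∏ i ∈ Ico k N, quadFactor p v (a * p ^ i) =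
      ∏ i ∈ Ico k (N + 1), quadFactor p v (a * p ^ i) := by
    rw [prod_Ico_succ_top hk, mul_comm]
  have hquot : (1 - p ^ (N + 1) * p ^ k) * (1 - a * p ^ (N + 1)) * (1 - a * p * p ^ (N + 1))
        * (qPochhammer (1 / p ^ N) p k * qPochhammer (p ^ (N + 1)) p k
          / qPochhammer (a * p ^ (N + 1)) p k) =
      -(p ^ (N + 1) - p ^ k) * (1 - a * p ^ (N + 1) * p ^ k) * (1 - a * p * p ^ (N + 1) * p ^ k)
        * (qPochhammer (1 / p ^ (N + 1)) p k * qPochhammer (p * p ^ (N + 1)) p k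
          / qPochhammer (a * p ^ 2 * p ^ (N + 1)) p k) := by
    have hnum := quadTerm_num_eq hp hp1 N k
    have hden := quadTerm_den_eq p a N k
    rw [← mul_div_assoc, ← mul_div_assoc, div_eq_div_iff hne₁ hne₂]
    linear_combination (1 - a * p ^ (N + 1)) * (1 - a * p * p ^ (N + 1))
        * qPochhammer (a * p ^ 2 * p ^ (N + 1)) p k * hnum
      - (p ^ (N + 1) - p ^ k) * qPochhammer (1 / p ^ (N + 1)) p k
        * qPochhammer (p * p ^ (N + 1)) p k * hden
  rw [quadTerm, mul_left_comm (quadFactor _ _ _), hprod, quadBase]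
  linear_combination (1 - a * (p ^ k) ^ 2) * qPochhammer (a ^ 2) (p ^ 2) k
    / qPochhammer (p ^ 2) (p ^ 2) k / qPochhammer (a / p ^ N) p k * (-a) ^ k
    * (∏ i ∈ range k, quadFactor p v (p ^ i))
    * (∏ i ∈ Ico k (N + 1), quadFactor p v (a * p ^ i)) * hquot

lemma quadBase_succ {p a : F} (hp : p ≠ 0) (hp1 : ∀ m : ℕ, 0 < m → p ^ m ≠ 1)
    (ha : ∀ m : ℤ, a * p ^ m ≠ 1) (v : F) (N k : ℕ) :
    (1 - p ^ 2 * (p ^ 2) ^ k) * (1 - a * p ^ 2 * p ^ (N + 1) * p ^ k) * (1 - a / p ^ N * p ^ k)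
        * quadBase p a v N (k + 1) =
      -a * (1 - a ^ 2 * (p ^ 2) ^ k) * (1 - 1 / p ^ (N + 1) * p ^ k)
        * (1 - p * p ^ (N + 1) * p ^ k) * quadFactor p v (p ^ k) * quadBase p a v N k := by
  have h₁ : 1 - p ^ 2 * (p ^ 2) ^ k ≠ 0 := sub_ne_zero.mpr (by
    simpa only [pow_add, pow_mul] using (hp1 (2 + 2 * k) (by lia)).symm)
  have h₂ : 1 - a * p ^ 2 * p ^ (N + 1) * p ^ k ≠ 0 := sub_ne_zero.mpr (by
    simpa only [← zpow_natCast, Nat.cast_add, zpow_add₀ hp, mul_assoc]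
      using (ha (2 + (N + 1 + k) : ℕ)).symm)
  have h₃ : 1 - a / p ^ N * p ^ k ≠ 0 := sub_ne_zero.mpr (by
    simpa only [zpow_sub₀ hp, zpow_natCast, mul_div_assoc', div_mul_eq_mul_div]
      using (ha (k - N)).symm)
  simp only [quadBase, qPochhammer_succ, prod_range_succ, pow_succ (-a) k]
  generalize 1 - p ^ 2 * (p ^ 2) ^ k = w₁ at *
  generalize 1 - a * p ^ 2 * p ^ (N + 1) * p ^ k = w₂ at *
  generalize 1 - a / p ^ N * p ^ k = w₃ at *
  have hcancel (z : F) : w₁ * w₂ * w₃ * (w₁ * w₂ * w₃)⁻¹ * z = z := by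
    rw [mul_inv_cancel₀ (mul_ne_zero (mul_ne_zero h₁ h₂) h₃), one_mul]
  refine Eq.trans ?_ (hcancel _)
  ring

lemma quadCert_succ {p a : F} (hp : p ≠ 0) (hp1 : ∀ m : ℕ, 0 < m → p ^ m ≠ 1)
    (ha : ∀ m : ℤ, a * p ^ m ≠ 1) (v : F) (N k : ℕ) :
    quadCert p a v N (k + 1) =
      a * (1 - a ^ 2 * (p ^ k) ^ 2) * (p ^ (N + 1) - p ^ k)
        * (1 - a ^ 2 * p * p ^ (N + 1) * p ^ k) * quadFactor p v (p ^ k)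
        * (quadBase p a v N k * ∏ i ∈ Ico (k + 1) (N + 1), quadFactor p v (a * p ^ i)) := by
  have hP : p ^ (N + 1) ≠ 0 := pow_ne_zero _ hp
  have h : 1 - p ^ (N + 1) * p ^ (k + 1) ≠ 0 := sub_ne_zero.mpr (by
    simpa only [pow_add] using (hp1 (N + 1 + (k + 1)) (by lia)).symm)
  have e₁ : p ^ (N + 1) - a * p ^ (k + 1) = p ^ (N + 1) * (1 - a / p ^ N * p ^ k) := by
    field_simp
    ring
  have e₂ : p ^ (N + 1) - p ^ k = p ^ (N + 1) * (1 - 1 / p ^ (N + 1) * p ^ k) := by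
    rw [mul_sub, ← mul_assoc, mul_one_div_cancel hP, mul_one, one_mul]
  rw [quadCert, e₁, e₂, neg_mul, div_mul_eq_mul_div, neg_eq_iff_eq_neg, div_eq_iff h]
  linear_combination (1 - a ^ 2 * p ^ (N + 1) * p ^ (k + 1)) * p ^ (N + 1)
    * (∏ i ∈ Ico (k + 1) (N + 1), quadFactor p v (a * p ^ i)) * quadBase_succ hp hp1 ha v N k

/-- The rational-function identity behind the certificate `quadCert`, with `K = pᵏ` and
`Q = pᴺ⁺¹`. -/
lemma quadCert_identity (p a v K Q : F) :
    (1 - a) * (1 - a * p * K ^ 2) * (1 - a ^ 2 * K ^ 2) * K * (1 - Q * K)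
          * quadFactor p v (a * Q)
        + (1 + a) * (1 - a * K ^ 2) * (Q - K) * (1 - a * Q * K) * (1 - a * p * Q * K)
          * quadFactor p v (a * K) =
      a * (1 - a ^ 2 * K ^ 2) * (Q - K) * (1 - a ^ 2 * p * Q * K) * (1 - Q * K) * quadFactor p v K
        + (1 - K ^ 2) * (1 - a ^ 2 * Q * K) * (Q - a * K) * (1 - a * p * Q * K)
          * quadFactor p v (a * K) := by
  simp only [quadFactor]
  ring

lemma quadTerm_recurrence {p a : F} (hp : p ≠ 0) (hp1 : ∀ m : ℕ, 0 < m → p ^ m ≠ 1)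
    (ha : ∀ m : ℤ, a * p ^ m ≠ 1) (v : F) {N k : ℕ} (hk : k ≤ N) :
    (1 - a) * ((1 - a) * (1 + a) * quadTerm p (a * p) v (N + 1) k)
        - (1 + a) * ((1 - a * p ^ (N + 1)) * (1 - a * p * p ^ (N + 1))
          * (quadFactor p v (a * p ^ N) * quadTerm p a v N k)) =
      quadCert p a v N (k + 1) - quadCert p a v N k := by
  have h : 1 - p ^ (N + 1) * p ^ k ≠ 0 := sub_ne_zero.mpr (by
    simpa only [pow_add] using (hp1 (N + 1 + k) (by lia)).symm)
  have hterm := quadTerm_eq_quadBase hp hp1 (fun m ↦ mod_cast ha m) v hk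
  have hcert : (1 - p ^ (N + 1) * p ^ k) * quadCert p a v N k =
      -((1 - (p ^ k) ^ 2) * (1 - a ^ 2 * p ^ (N + 1) * p ^ k) * (p ^ (N + 1) - a * p ^ k)
          * (1 - a * p * p ^ (N + 1) * p ^ k))
        * (quadBase p a v N k * ∏ i ∈ Ico k (N + 1), quadFactor p v (a * p ^ i)) := by
    rw [quadCert, ← mul_assoc, mul_neg, mul_div_cancel₀ _ h]
  rw [prod_eq_prod_Ico_succ_bot (by lia)] at hterm hcert
  refine mul_left_cancel₀ h ?_
  rw [quadTerm_shift hp, quadCert_succ hp hp1 ha, prod_Ico_succ_top (by lia : k + 1 ≤ N + 1)]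
  linear_combination -(1 + a) * hterm + hcert + quadBase p a v N k
    * (∏ i ∈ Ico (k + 1) (N + 1), quadFactor p v (a * p ^ i))
    * quadCert_identity p a v (p ^ k) (p ^ (N + 1))

lemma sum_quadTerm_succ {p a : F} (hp : p ≠ 0) (hp1 : ∀ m : ℕ, 0 < m → p ^ m ≠ 1)
    (ha : ∀ m : ℤ, a * p ^ m ≠ 1) (ha1 : a ≠ -1) (v : F) (N : ℕ) :
    (1 - a) ^ 2 * ∑ k ∈ range (N + 2), quadTerm p (a * p) v (N + 1) k =
      (1 - a * p ^ (N + 1)) * (1 - a * p * p ^ (N + 1)) * quadFactor p v (a * p ^ N)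
        * ∑ k ∈ range (N + 1), quadTerm p a v N k := by
  have hlast : (1 - a) * ((1 - a) * (1 + a) * quadTerm p (a * p) v (N + 1) (N + 1)) =
      -quadCert p a v N (N + 1) := by
    have h : 1 - p ^ (N + 1) * p ^ (N + 1) ≠ 0 := sub_ne_zero.mpr (by
      simpa only [pow_add] using (hp1 (N + 1 + (N + 1)) (by lia)).symm)
    rw [quadTerm_shift hp, quadCert, neg_mul, neg_neg, div_mul_eq_mul_div, eq_div_iff h,
      Ico_self, Ico_self]
    ring
  have hfirst : quadCert p a v N 0 = 0 := by simp [quadCert]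
  have hsum := sum_congr rfl fun k (hk : k ∈ range (N + 1)) ↦
    quadTerm_recurrence hp hp1 ha v (Nat.lt_succ_iff.mp (mem_range.mp hk))
  rw [sum_range_sub, hfirst, sum_sub_distrib, ← mul_sum, ← mul_sum, ← mul_sum, ← mul_sum,
    ← mul_sum] at hsum
  have ha1' : 1 + a ≠ 0 := fun h ↦ ha1 (eq_neg_of_add_eq_zero_right h)
  refine mul_left_cancel₀ ha1' ?_
  rw [sum_range_succ]
  linear_combination hsum + hlast

lemma sum_quadTerm_num_succ (p a : F) (N : ℕ) :
    (1 - a) ^ 2 * (qPochhammer (a * p) p (N + 2) * qPochhammer (a * p) p (N + 1)) =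
      (1 - a * p ^ (N + 1)) * (1 - a * p * p ^ (N + 1))
        * (qPochhammer a p (N + 1) * qPochhammer a p N)
        * ((1 - a * p ^ N) * (1 - a * p ^ (N + 1))) := by
  have h₁ := qPochhammer_mul_one_sub a p (N + 2)
  have h₂ := qPochhammer_mul_one_sub a p (N + 1)
  calc _ = (1 - a) * qPochhammer (a * p) p (N + 2) * ((1 - a) * qPochhammer (a * p) p (N + 1)) := by
        ring
    _ = _ := by
        rw [← h₁, ← h₂, qPochhammer_succ a p (N + 1), qPochhammer_succ a p N]
        ring

lemma sum_quadTerm_den_succ {p : F} (hp : p ≠ 0) (a : F) (N : ℕ) :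
    qPochhammer (a * p / p ^ (N + 1)) p (2 * (N + 1)) =
      qPochhammer (a / p ^ N) p (2 * N) * ((1 - a * p ^ N) * (1 - a * p ^ (N + 1))) := by
  rw [pow_succ, mul_div_mul_right _ _ hp, mul_add_one, qPochhammer_succ, qPochhammer_succ,
    mul_assoc]
  congr 3 <;> (field_simp; ring)

theorem sum_quadTerm {p : F} (hp : p ≠ 0) (hp1 : ∀ m : ℕ, 0 < m → p ^ m ≠ 1) (v : F) (N : ℕ)
    {a : F} (ha : ∀ m : ℤ, a * p ^ m ≠ 1) (ha' : ∀ m : ℤ, a * p ^ m ≠ -1) :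
    ∑ k ∈ range (N + 1), quadTerm p a v N k =
      qPochhammer a p (N + 1) * qPochhammer a p N / qPochhammer (a / p ^ N) p (2 * N)
        * ∏ i ∈ range N, quadFactor p v (a * (p ^ (2 * i) / p ^ N)) := by
  induction N generalizing a with
  | zero => simp [quadTerm, qPochhammer]
  | succ N ih =>
    obtain ⟨a, rfl⟩ : ∃ b, a = b * p := ⟨a / p, (div_mul_cancel₀ a hp).symm⟩
    have hb (m : ℤ) : a * p ^ m ≠ 1 := by
      have := ha (m - 1)
      rwa [mul_assoc, ← zpow_one_add₀ hp, add_sub_cancel] at this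
    have hb' (m : ℤ) : a * p ^ m ≠ -1 := by
      have := ha' (m - 1)
      rwa [mul_assoc, ← zpow_one_add₀ hp, add_sub_cancel] at this
    have hprod : ∏ i ∈ range (N + 1), quadFactor p v (a * p * (p ^ (2 * i) / p ^ (N + 1))) =
        (∏ i ∈ range N, quadFactor p v (a * (p ^ (2 * i) / p ^ N)))
          * quadFactor p v (a * p ^ N) := by
      have harg (i : ℕ) : a * p * (p ^ (2 * i) / p ^ (N + 1)) = a * (p ^ (2 * i) / p ^ N) := by
        rw [pow_succ]
        field_simp
      rw [prod_congr rfl fun i _ ↦ congrArg _ (harg i), prod_range_succ, two_mul, pow_add,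
        mul_div_cancel_right₀ _ (pow_ne_zero N hp)]
    have hne : (1 - a * p ^ N) * (1 - a * p ^ (N + 1)) ≠ 0 := mul_ne_zero
      (sub_ne_zero.mpr (mod_cast (hb N).symm)) (sub_ne_zero.mpr (mod_cast (hb (N + 1)).symm))
    have h1 : 1 - a ≠ 0 := sub_ne_zero.mpr (by simpa using (hb 0).symm)
    refine mul_left_cancel₀ (pow_ne_zero 2 h1) ?_
    rw [sum_quadTerm_succ hp hp1 hb (by simpa using hb' 0) v N, ih hb hb', hprod,
      ← mul_assoc ((1 - a) ^ 2), ← mul_div_assoc ((1 - a) ^ 2), sum_quadTerm_num_succ,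
      sum_quadTerm_den_succ hp, mul_div_mul_right _ _ hne]
    ring

end QuadraticSummation

section Specialization

variable {F : Type*} [Field F]

/-- The quotient `(t; t²)_k / (t²; t²)_k`. -/
def pochRatio (t : F) (k : ℕ) : F :=
  ∏ j ∈ range k, (1 - t ^ (2 * j + 1)) / (1 - t ^ (2 * j + 2))

/-- The part of the summand that does not involve the fourth power of `pochRatio t k`. -/
def sumWeight (t : F) (k : ℕ) : F :=
  (-1) ^ k * ((1 - t ^ (4 * k + 1)) / (1 - t)) * pochRatio (t ^ 2) k * t ^ k

/-- The deformation of `pochRatio t k ^ 2` in which the double zeros `(1 - z)²` are replaced by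
`1 - u z + z²`; it specialises to `pochRatio t k ^ 2` at `u = 2`. -/
def quadRatio (t u : F) (k : ℕ) : F :=
  ∏ j ∈ range k, quadFactor 1 u (t ^ (2 * j + 1)) / quadFactor 1 u (t ^ (2 * j + 2))

lemma quadFactor_sq (t u z : F) : quadFactor (t ^ 2) (t * u) z = quadFactor 1 u (t * z) := by
  simp only [quadFactor]
  ring

lemma quadFactor_inv {z : F} (hz : z ≠ 0) (u : F) :
    quadFactor 1 u z⁻¹ = (z ^ 2)⁻¹ * quadFactor 1 u z := by
  simp only [quadFactor]
  field_simp
  ring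

lemma quadFactor_add_inv {x : F} (hx : x ≠ 0) (z : F) :
    quadFactor 1 (x + x⁻¹) z = (1 - x * z) * (1 - z / x) := by
  simp only [quadFactor]
  field_simp
  ring

lemma qPochhammer_sq_div {t : F} (ht : t ≠ 0) (N : ℕ) :
    qPochhammer (t / (t ^ 2) ^ N) (t ^ 2) (2 * N) =
      (-1) ^ N / t ^ (N ^ 2) * qPochhammer t (t ^ 2) N ^ 2 := by
  have hterm (i : ℕ) : 1 - t / (t ^ 2) ^ N * (t ^ 2) ^ i = 1 - t ^ (2 * i + 1 - 2 * N : ℤ) := by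
    rw [zpow_sub₀ ht, zpow_add₀ ht, zpow_one]
    norm_cast
    ring
  have hpair (j : ℕ) : (1 - t ^ (2 * j + 1 : ℤ)) * (1 - t ^ (-(2 * j + 1) : ℤ)) =
      -((1 - t * (t ^ 2) ^ j) ^ 2 / t ^ (2 * j + 1)) := by
    rw [zpow_neg]
    norm_cast
    field_simp
    ring
  have hexp (N : ℕ) : ∑ j ∈ range N, (2 * j + 1) = N ^ 2 := by
    induction N with
    | zero => rfl
    | succ N ih => rw [sum_range_succ, ih]; ring
  rw [qPochhammer, prod_congr rfl fun i _ ↦ hterm i,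
    prod_range_two_mul_balanced (fun m ↦ 1 - t ^ m) N, prod_congr rfl fun j _ ↦ hpair j,
    prod_neg, prod_div_distrib, prod_pow, card_range, prod_pow_eq_pow_sum, hexp, qPochhammer]
  ring

/-- The value of the parameter `u` at which `quadRatio t u` supplies the terminating factors of the
summation formula. -/
def terminatingParam (t : F) (n : ℕ) : F := t ^ n + (t ^ n)⁻¹

lemma prod_quadFactor_terminatingParam_odd {t : F} (ht : t ≠ 0) (N k : ℕ) :
    ∏ j ∈ range k, quadFactor 1 (terminatingParam t (2 * N + 1)) (t ^ (2 * j + 1)) =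
      qPochhammer (1 / (t ^ 2) ^ N) (t ^ 2) k * qPochhammer ((t ^ 2) ^ (N + 1)) (t ^ 2) k := by
  rw [qPochhammer, qPochhammer, ← prod_mul_distrib]
  refine prod_congr rfl fun j _ ↦ ?_
  rw [terminatingParam, quadFactor_add_inv (pow_ne_zero _ ht)]
  field_simp
  ring

lemma prod_quadFactor_terminatingParam_even {t : F} (ht : t ≠ 0) (N k : ℕ) :
    ∏ j ∈ range k, quadFactor 1 (terminatingParam t (2 * N + 1)) (t ^ (2 * j + 2)) =
      qPochhammer (t * (t ^ 2) ^ (N + 1)) (t ^ 2) k * qPochhammer (t / (t ^ 2) ^ N) (t ^ 2) k := by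
  rw [qPochhammer, qPochhammer, ← prod_mul_distrib]
  refine prod_congr rfl fun j _ ↦ ?_
  rw [terminatingParam, quadFactor_add_inv (pow_ne_zero _ ht)]
  field_simp
  ring

lemma pochRatio_sq (t : F) (k : ℕ) :
    pochRatio (t ^ 2) k = qPochhammer (t ^ 2) ((t ^ 2) ^ 2) k
      / qPochhammer ((t ^ 2) ^ 2) ((t ^ 2) ^ 2) k := by
  rw [pochRatio, prod_div_distrib, qPochhammer, qPochhammer]
  congr 1 <;> exact prod_congr rfl fun j _ ↦ by ring

lemma quadTerm_sq {t : F} (ht : t ≠ 0) (ht1 : t ≠ 1) (u : F) {N k : ℕ} (hk : k ≤ N)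
    (hu : ∀ j < N, quadFactor 1 u (t ^ (2 * j + 2)) ≠ 0) :
    quadTerm (t ^ 2) t (t * u) N k =
      (1 - t) * (∏ j ∈ range N, quadFactor 1 u (t ^ (2 * j + 2)))
        * (sumWeight t k * quadRatio t (terminatingParam t (2 * N + 1)) k * quadRatio t u k) := by
  have h1 : 1 - t ≠ 0 := sub_ne_zero.mpr ht1.symm
  have hodd : ∏ i ∈ range k, quadFactor (t ^ 2) (t * u) ((t ^ 2) ^ i) =
      ∏ i ∈ range k, quadFactor 1 u (t ^ (2 * i + 1)) :=
    prod_congr rfl fun i _ ↦ by rw [quadFactor_sq, ← pow_mul, pow_succ']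
  have heven : ∏ i ∈ Ico k N, quadFactor (t ^ 2) (t * u) (t * (t ^ 2) ^ i) =
      ∏ i ∈ Ico k N, quadFactor 1 u (t ^ (2 * i + 2)) :=
    prod_congr rfl fun i _ ↦ by rw [quadFactor_sq]; congr 1; ring
  have hne : ∏ j ∈ range k, quadFactor 1 u (t ^ (2 * j + 2)) ≠ 0 :=
    prod_ne_zero_iff.mpr fun j hj ↦ hu j (by grind)
  rw [quadTerm, hodd, heven, sumWeight, pochRatio_sq, quadRatio, prod_div_distrib,
    prod_quadFactor_terminatingParam_odd ht, prod_quadFactor_terminatingParam_even ht, quadRatio,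
    prod_div_distrib, ← prod_range_mul_prod_Ico _ hk, neg_pow t]
  field_simp
  ring

lemma zpow_ne_one_of_forall_pow {t : F} (ht : ∀ m : ℕ, 0 < m → t ^ m ≠ 1) {m : ℤ} (hm : m ≠ 0) :
    t ^ m ≠ 1 := by
  have h := ht _ (Int.natAbs_pos.mpr hm)
  obtain hm' | hm' := Int.natAbs_eq m <;> rw [hm']
  · rwa [zpow_natCast]
  · rwa [zpow_neg, zpow_natCast, inv_ne_one]

lemma sum_sumWeight_mul_quadRatio {t : F} (ht : t ≠ 0) (ht1 : ∀ m : ℕ, 0 < m → t ^ m ≠ 1) (u : F)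
    {N : ℕ} (hu : ∀ j < N, quadFactor 1 u (t ^ (2 * j + 2)) ≠ 0) :
    (∏ j ∈ range N, quadFactor 1 u (t ^ (2 * j + 2)))
        * ∑ k ∈ range (N + 1),
          sumWeight t k * quadRatio t (terminatingParam t (2 * N + 1)) k * quadRatio t u k =
      (1 - t ^ (2 * N + 1)) / (1 - t) * ((-1) ^ N * t ^ (N ^ 2))
        * ∏ i ∈ range N, quadFactor 1 u (t ^ (4 * i + 2 - 2 * N : ℤ)) := by
  have h1 : 1 - t ≠ 0 := sub_ne_zero.mpr (by simpa using (ht1 1 one_pos).symm)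
  have hodd (m : ℤ) : t * (t ^ 2) ^ m = t ^ (2 * m + 1) := by
    rw [zpow_add_one₀ ht, zpow_mul, mul_comm]
    norm_cast
  have hsum := sum_quadTerm (p := t ^ 2) (a := t) (pow_ne_zero 2 ht)
    (fun m hm ↦ by rw [← pow_mul]; exact ht1 _ (by lia)) (t * u) N
    (fun m ↦ by rw [hodd]; exact zpow_ne_one_of_forall_pow ht1 (by lia))
    (fun m h ↦ zpow_ne_one_of_forall_pow ht1 (m := (2 * m + 1) * 2) (by lia) (by
      rw [zpow_mul, ← hodd, h]
      simp))
  have hfactor (i : ℕ) : quadFactor (t ^ 2) (t * u) (t * ((t ^ 2) ^ (2 * i) / (t ^ 2) ^ N)) =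
      quadFactor 1 u (t ^ (4 * i + 2 - 2 * N : ℤ)) := by
    rw [quadFactor_sq]
    congr 1
    rw [zpow_sub₀ ht, zpow_add₀ ht]
    norm_cast
    ring
  have hne : qPochhammer t (t ^ 2) N ≠ 0 := qPochhammer_ne_zero (fun i ↦ by
    simpa only [← pow_mul, ← pow_succ'] using ht1 (2 * i + 1) (by lia)) N
  rw [sum_congr rfl fun k hk ↦ quadTerm_sq ht (by simpa using ht1 1 one_pos) u
    (Nat.lt_succ_iff.mp (mem_range.mp hk)) hu, ← mul_sum, qPochhammer_sq_div ht, qPochhammer_succ,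
    prod_congr rfl fun i _ ↦ hfactor i] at hsum
  rw [div_mul_eq_mul_div, div_mul_eq_mul_div, eq_div_iff h1]
  refine Eq.trans (by ring) (hsum.trans ?_)
  congr 1
  have hsign : ((-1) ^ N * (-1) ^ N : F) = 1 := by rw [← mul_pow]; simp
  field_simp
  linear_combination (t * (t ^ 2) ^ N - 1) * hsign

lemma prod_quadFactor_mul_inv {t : F} (ht : t ≠ 0) (u : F) (e : ℕ → ℕ) (K : ℕ) :
    ∏ j ∈ range K, quadFactor 1 u (t ^ e j) * quadFactor 1 u (t ^ e j)⁻¹ =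
      (∏ j ∈ range K, quadFactor 1 u (t ^ e j)) ^ 2 / t ^ (2 * ∑ j ∈ range K, e j) := by
  rw [mul_comm 2, pow_mul, ← prod_pow_eq_pow_sum, ← prod_pow, ← prod_pow, ← prod_div_distrib]
  refine prod_congr rfl fun j _ ↦ ?_
  rw [quadFactor_inv (pow_ne_zero _ ht)]
  ring

lemma prod_quadFactor_balanced_even {t : F} (ht : t ≠ 0) (u : F) (K : ℕ) :
    ∏ i ∈ range (2 * K), quadFactor 1 u (t ^ (4 * i + 2 - 2 * (2 * K : ℕ) : ℤ)) =
      (∏ j ∈ range K, quadFactor 1 u (t ^ (4 * j + 2))) ^ 2 / t ^ ((2 * K) ^ 2) := by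
  have hexp (K : ℕ) : 2 * ∑ j ∈ range K, (4 * j + 2) = (2 * K) ^ 2 := by
    induction K with
    | zero => rfl
    | succ K ih => rw [sum_range_succ, mul_add, ih]; ring
  rw [← hexp, ← prod_quadFactor_mul_inv ht]
  refine Eq.trans (prod_congr rfl fun i _ ↦ ?_)
    ((prod_range_two_mul_balanced (fun m ↦ quadFactor 1 u (t ^ (2 * m))) K).trans
      (prod_congr rfl fun j _ ↦ ?_))
  · congr 2
    push_cast
    ring
  · rw [mul_neg, zpow_neg]
    norm_cast
    ring_nf

lemma prod_quadFactor_balanced_odd {t : F} (ht : t ≠ 0) (u : F) (K : ℕ) :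
    ∏ i ∈ range (2 * K + 1), quadFactor 1 u (t ^ (4 * i + 2 - 2 * (2 * K + 1 : ℕ) : ℤ)) =
      (2 - u) * ((∏ j ∈ range K, quadFactor 1 u (t ^ (4 * j + 4))) ^ 2
        / t ^ (4 * K * (K + 1))) := by
  have hexp (K : ℕ) : 2 * ∑ j ∈ range K, (4 * j + 4) = 4 * K * (K + 1) := by
    induction K with
    | zero => rfl
    | succ K ih => rw [sum_range_succ, mul_add, ih]; ring
  have hzero : quadFactor 1 u (t ^ (4 * 0 : ℤ)) = 2 - u := by
    rw [mul_zero, zpow_zero, quadFactor]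
    ring
  rw [← hexp, ← prod_quadFactor_mul_inv ht, ← hzero]
  refine Eq.trans (prod_congr rfl fun i _ ↦ ?_)
    ((prod_range_two_mul_add_one_balanced (fun m ↦ quadFactor 1 u (t ^ (4 * m))) K).trans
      (congrArg _ (prod_congr rfl fun j _ ↦ ?_)))
  · congr 2
    push_cast
    ring
  · rw [mul_neg, zpow_neg]
    norm_cast

lemma prod_range_two_mul {M : Type*} [CommMonoid M] (f : ℕ → M) (K : ℕ) :
    ∏ i ∈ range (2 * K), f i = (∏ j ∈ range K, f (2 * j)) * ∏ j ∈ range K, f (2 * j + 1) := by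
  induction K with
  | zero => simp
  | succ K ih => rw [mul_add_one, prod_range_succ, prod_range_succ, ih, prod_range_succ,
      prod_range_succ, mul_assoc, mul_mul_mul_comm]

lemma prod_pow_even_eq {M : Type*} [CommMonoid M] (g : F → M) (t : F) (K : ℕ) :
    ∏ j ∈ range (2 * K), g (t ^ (2 * j + 2)) =
      (∏ j ∈ range K, g (t ^ (4 * j + 2))) * ∏ j ∈ range K, g (t ^ (4 * j + 4)) := by
  rw [prod_range_two_mul]
  congr 1 <;> exact prod_congr rfl fun j _ ↦ by congr 2; ring

theorem sum_sumWeight_mul_quadRatio_even {t : F} (ht : t ≠ 0) (ht1 : ∀ m : ℕ, 0 < m → t ^ m ≠ 1)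
    (u : F) (K : ℕ) (hu : ∀ j < 2 * K, quadFactor 1 u (t ^ (2 * j + 2)) ≠ 0) :
    ∑ k ∈ range (2 * K + 1),
        sumWeight t k * quadRatio t (terminatingParam t (2 * (2 * K) + 1)) k * quadRatio t u k =
      (1 - t ^ (2 * (2 * K) + 1)) / (1 - t)
        * quadRatio (t ^ 2) u K := by
  have hsum := sum_sumWeight_mul_quadRatio ht ht1 u hu
  have hne := prod_ne_zero_iff.mpr fun j hj ↦ hu j (mem_range.mp hj)
  rw [prod_quadFactor_balanced_even ht] at hsum
  refine mul_left_cancel₀ hne (hsum.trans ?_)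
  rw [prod_pow_even_eq (quadFactor 1 u)] at hne ⊢
  have hratio : quadRatio (t ^ 2) u K = (∏ j ∈ range K, quadFactor 1 u (t ^ (4 * j + 2)))
      / ∏ j ∈ range K, quadFactor 1 u (t ^ (4 * j + 4)) := by
    rw [quadRatio, prod_div_distrib]
    congr 1 <;> exact prod_congr rfl fun j _ ↦ by congr 1; ring
  rw [hratio]
  have := left_ne_zero_of_mul hne
  have := right_ne_zero_of_mul hne
  have hsign : (-1 : F) ^ (2 * K) = 1 := by simp
  rw [hsign]
  field_simp

theorem sum_sumWeight_mul_quadRatio_odd {t : F} (ht : t ≠ 0) (ht1 : ∀ m : ℕ, 0 < m → t ^ m ≠ 1)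
    (u : F) (K : ℕ) (hu : ∀ j < 2 * K + 1, quadFactor 1 u (t ^ (2 * j + 2)) ≠ 0) :
    ∑ k ∈ range (2 * K + 2),
        sumWeight t k * quadRatio t (terminatingParam t (2 * (2 * K + 1) + 1)) k
          * quadRatio t u k =
      (1 - t ^ (2 * (2 * K + 1) + 1)) / (1 - t) * (t * (u - 2))
        * ((∏ j ∈ range K, quadFactor 1 u (t ^ (4 * j + 4)))
          / ∏ j ∈ range (K + 1), quadFactor 1 u (t ^ (4 * j + 2))) := by
  have hsum := sum_sumWeight_mul_quadRatio ht ht1 u hu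
  have hne := prod_ne_zero_iff.mpr fun j hj ↦ hu j (mem_range.mp hj)
  have hsplit : ∏ j ∈ range (2 * K + 1), quadFactor 1 u (t ^ (2 * j + 2)) =
      (∏ j ∈ range (K + 1), quadFactor 1 u (t ^ (4 * j + 2)))
        * ∏ j ∈ range K, quadFactor 1 u (t ^ (4 * j + 4)) := by
    rw [prod_range_succ, prod_pow_even_eq (quadFactor 1 u), mul_right_comm, prod_range_succ,
      show 2 * (2 * K) + 2 = 4 * K + 2 by lia]
  rw [prod_quadFactor_balanced_odd ht] at hsum
  refine mul_left_cancel₀ hne (hsum.trans ?_)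
  rw [hsplit] at hne ⊢
  have := left_ne_zero_of_mul hne
  have := right_ne_zero_of_mul hne
  have hpow : t ^ ((2 * K + 1) ^ 2) = t * t ^ (4 * K * (K + 1)) := by ring
  have hsign : (-1 : F) ^ (2 * K + 1) = -1 := by rw [pow_succ, pow_mul]; simp
  rw [hpow, hsign]
  field_simp
  ring

/-- The Koebe function, which measures the first-order effect of replacing `(1 - z)²` by
`1 - (2 + δ) z + z²`. -/
def koebe (z : F) : F := z / (1 - z) ^ 2

lemma quadFactor_two_add (δ : F) {z : F} (hz : z ≠ 1) :
    quadFactor 1 (2 + δ) z = (1 - z) ^ 2 * (1 - δ * koebe z) := by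
  have : 1 - z ≠ 0 := sub_ne_zero.mpr hz.symm
  simp only [quadFactor, koebe]
  field_simp
  ring

lemma quadRatio_two_add {t : F} (ht1 : ∀ m : ℕ, 0 < m → t ^ m ≠ 1) (δ : F) (k : ℕ) :
    quadRatio t (2 + δ) k = pochRatio t k ^ 2 *
      ∏ j ∈ range k, (1 - δ * koebe (t ^ (2 * j + 1))) / (1 - δ * koebe (t ^ (2 * j + 2))) := by
  rw [quadRatio, pochRatio, ← prod_pow, ← prod_mul_distrib]
  refine prod_congr rfl fun j _ ↦ ?_
  rw [quadFactor_two_add δ (ht1 _ (by lia)), quadFactor_two_add δ (ht1 _ (by lia)), div_pow,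
    div_mul_div_comm]

lemma quadRatio_two (t : F) (k : ℕ) : quadRatio t 2 k = pochRatio t k ^ 2 := by
  rw [quadRatio, pochRatio, ← prod_pow]
  refine prod_congr rfl fun j _ ↦ ?_
  rw [div_pow]
  congr 1 <;> (rw [quadFactor]; ring)

/-- The amount `terminatingParam t n - 2` by which the terminating parameter misses the value `2`;
it is divisible by `(1 - tⁿ)²`. -/
def paramGap (t : F) (n : ℕ) : F := (1 - t ^ n) ^ 2 / t ^ n

lemma terminatingParam_eq {t : F} (ht : t ≠ 0) (n : ℕ) :
    terminatingParam t n = 2 + paramGap t n := by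
  rw [terminatingParam, paramGap]
  field_simp
  ring

lemma quadFactor_terminatingParam_pow {t : F} (ht : t ≠ 0) (n m : ℕ) :
    quadFactor 1 (terminatingParam t n) (t ^ m) =
      -(t ^ m / t ^ n) * ((1 - t ^ (n + m : ℤ)) * (1 - t ^ (n - m : ℤ))) := by
  rw [terminatingParam, quadFactor_add_inv (pow_ne_zero n ht), zpow_add₀ ht, zpow_sub₀ ht]
  simp only [zpow_natCast]
  field_simp
  ring

lemma quadFactor_terminatingParam_ne_zero {t : F} (ht : t ≠ 0) (ht1 : ∀ m : ℕ, 0 < m → t ^ m ≠ 1)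
    (N j : ℕ) : quadFactor 1 (terminatingParam t (2 * N + 1)) (t ^ (2 * j + 2)) ≠ 0 := by
  have hne {m : ℤ} (hm : m ≠ 0) : 1 - t ^ m ≠ 0 :=
    sub_ne_zero.mpr (zpow_ne_one_of_forall_pow ht1 hm).symm
  rw [quadFactor_terminatingParam_pow ht]
  exact mul_ne_zero (neg_ne_zero.mpr (div_ne_zero (pow_ne_zero _ ht) (pow_ne_zero _ ht)))
    (mul_ne_zero (hne (by lia)) (hne (by lia)))

lemma prod_quadFactor_terminatingParam_pow_four {t : F} (ht : t ≠ 0) (K : ℕ) :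
    (1 - t ^ (4 * K + 3)) * ∏ j ∈ range K,
        quadFactor 1 (terminatingParam t (4 * K + 3)) (t ^ (4 * j + 4)) =
      (∏ j ∈ range K, -(t ^ (4 * j + 4) / t ^ (4 * K + 3)))
        * ∏ i ∈ range (2 * K + 1), (1 - t ^ (4 * i + 3)) := by
  have hbal := prod_range_two_mul_add_one_balanced
    (fun m ↦ 1 - t ^ ((4 * K + 3 : ℕ) + 4 * m : ℤ)) K
  have hleft (i : ℕ) : t ^ (4 * i + 3) = t ^ ((4 * K + 3 : ℕ) + 4 * (i - K) : ℤ) := by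
    rw [← zpow_natCast]
    congr 1
    lia
  rw [prod_congr rfl fun j _ ↦ quadFactor_terminatingParam_pow ht _ _, prod_mul_distrib,
    mul_left_comm, prod_congr rfl fun i _ ↦ congrArg (1 - ·) (hleft i), hbal]
  refine congrArg _ (congrArg₂ _ ?_ (prod_congr rfl fun j _ ↦ ?_))
  · rw [mul_zero, add_zero, zpow_natCast]
  · congr 3

lemma prod_quadFactor_terminatingParam_pow_two {t : F} (ht : t ≠ 0) (K : ℕ) :
    ∏ j ∈ range (K + 1), quadFactor 1 (terminatingParam t (4 * K + 3)) (t ^ (4 * j + 2)) =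
      (∏ j ∈ range (K + 1), -(t ^ (4 * j + 2) / t ^ (4 * K + 3)))
        * ((1 - t) * ∏ i ∈ range (2 * K + 1), (1 - t ^ (4 * i + 5))) := by
  have hbal := prod_range_two_mul_balanced
    (fun m ↦ 1 - t ^ ((4 * K + 3 : ℕ) + 2 * m : ℤ)) (K + 1)
  have hleft : (1 - t) * ∏ i ∈ range (2 * K + 1), (1 - t ^ (4 * i + 5)) =
      ∏ i ∈ range (2 * (K + 1)),
        (1 - t ^ ((4 * K + 3 : ℕ) + 2 * (2 * i + 1 - 2 * (K + 1 : ℕ)) : ℤ)) := by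
    have hexp (i : ℕ) : t ^ ((4 * K + 3 : ℕ) + 2 * (2 * i + 1 - 2 * (K + 1 : ℕ)) : ℤ) =
        t ^ (4 * i + 1) := by
      rw [← zpow_natCast]
      congr 1
      lia
    rw [prod_congr rfl fun i _ ↦ congrArg (1 - ·) (hexp i), mul_add_one 2 K,
      prod_range_succ' _ (2 * K + 1), mul_comm]
    simp only [mul_zero, zero_add, pow_one, mul_add, mul_one, add_assoc, Nat.reduceAdd]
  rw [prod_congr rfl fun j _ ↦ quadFactor_terminatingParam_pow ht _ _, prod_mul_distrib, hleft,
    hbal]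
  congr 1
  refine prod_congr rfl fun j _ ↦ ?_
  congr 3 <;> (push_cast; ring)

lemma prod_neg_pow_div {t : F} (ht : t ≠ 0) (K : ℕ) :
    ∏ j ∈ range K, -(t ^ (4 * j + 4) / t ^ (4 * K + 3)) =
      -t ^ (2 * K + 1) * ∏ j ∈ range (K + 1), -(t ^ (4 * j + 2) / t ^ (4 * K + 3)) := by
  have hshift : ∏ j ∈ range K, -(t ^ (4 * j + 4) / t ^ (4 * K + 3)) =
      t ^ (2 * K) * ∏ j ∈ range K, -(t ^ (4 * j + 2) / t ^ (4 * K + 3)) := by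
    have hterm (j : ℕ) : -(t ^ (4 * j + 4) / t ^ (4 * K + 3)) =
        t ^ 2 * -(t ^ (4 * j + 2) / t ^ (4 * K + 3)) := by ring
    rw [prod_congr rfl fun j _ ↦ hterm j, prod_mul_distrib, prod_const, card_range, ← pow_mul]
  rw [hshift, prod_range_succ]
  field_simp
  ring

theorem sum_sumWeight_mul_quadRatio_odd_terminatingParam {t : F} (ht : t ≠ 0)
    (ht1 : ∀ m : ℕ, 0 < m → t ^ m ≠ 1) (K : ℕ) :
    ∑ k ∈ range (2 * K + 2),
        sumWeight t k * quadRatio t (terminatingParam t (2 * (2 * K + 1) + 1)) k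
          * quadRatio t (terminatingParam t (2 * (2 * K + 1) + 1)) k =
      -(((1 - t ^ (2 * (2 * K + 1) + 1)) / (1 - t)) ^ 2 * (t ^ (2 * K + 1))⁻¹
        * ∏ j ∈ range (2 * K + 1), (1 - t ^ (4 * j + 3)) / (1 - t ^ (4 * j + 5))) := by
  have hsub (m : ℕ) (hm : 0 < m) : 1 - t ^ m ≠ 0 := sub_ne_zero.mpr (ht1 m hm).symm
  have h1 : 1 - t ≠ 0 := by simpa using hsub 1 one_pos
  have hn : 1 - t ^ (4 * K + 3) ≠ 0 := hsub _ (by lia)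
  have hden : ∏ i ∈ range (2 * K + 1), (1 - t ^ (4 * i + 5)) ≠ 0 :=
    prod_ne_zero_iff.mpr fun i _ ↦ hsub _ (by lia)
  have hprefix : ∏ j ∈ range (K + 1), -(t ^ (4 * j + 2) / t ^ (4 * K + 3)) ≠ 0 :=
    prod_ne_zero_iff.mpr fun j _ ↦
      neg_ne_zero.mpr (div_ne_zero (pow_ne_zero _ ht) (pow_ne_zero _ ht))
  rw [sum_sumWeight_mul_quadRatio_odd ht ht1 _ K fun j _ ↦
      quadFactor_terminatingParam_ne_zero ht ht1 (2 * K + 1) j,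
    show 2 * (2 * K + 1) + 1 = 4 * K + 3 by lia, prod_quadFactor_terminatingParam_pow_two ht,
    eq_div_of_mul_eq hn (mul_comm _ _ |>.trans (prod_quadFactor_terminatingParam_pow_four ht K)),
    prod_neg_pow_div ht, terminatingParam_eq ht, paramGap, prod_div_distrib]
  field_simp
  ring

end Specialization

section RootsOfUnity

variable {F : Type*} [Field F]

/-- The summand of the theorem, with `t` in place of `q`. -/
def summand (t : F) (k : ℕ) : F := sumWeight t k * pochRatio t k ^ 4

/-- The logarithmic derivative of `quadRatio t u k` with respect to `-u` at `u = 2`. -/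
def koebeSum (t : F) (k : ℕ) : F :=
  ∑ j ∈ range k, (koebe (t ^ (2 * j + 1)) - koebe (t ^ (2 * j + 2)))

lemma koebe_inv {z : F} (hz : z ≠ 0) : koebe z⁻¹ = koebe z := by
  by_cases h : z = 1
  · rw [h, inv_one]
  have h₁ : 1 - z ≠ 0 := sub_ne_zero.mpr (Ne.symm h)
  have h₂ : 1 - z⁻¹ ≠ 0 := sub_ne_zero.mpr (by simpa [eq_comm] using h)
  rw [koebe, koebe, div_eq_div_iff (pow_ne_zero 2 h₂) (pow_ne_zero 2 h₁)]
  field_simp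
  ring

lemma sum_range_succ_eq_zero_of_reflect [NeZero (2 : F)] {h : ℕ} {f : ℕ → F}
    (hf : ∀ k ≤ h, f (h - k) = -f k) : ∑ k ∈ range (h + 1), f k = 0 := by
  have hneg : ∑ k ∈ range (h + 1), f k = -∑ k ∈ range (h + 1), f k := by
    conv_lhs => rw [← sum_range_reflect]
    rw [← sum_neg_distrib]
    exact sum_congr rfl fun k hk ↦ hf k (Nat.lt_succ_iff.mp (mem_range.mp hk))
  have h2 : (2 : F) * ∑ k ∈ range (h + 1), f k = 0 := by linear_combination hneg
  exact (mul_eq_zero.mp h2).resolve_left two_ne_zero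

variable {t : F} {h : ℕ}

lemma isPrimitiveRoot_sq (ht : IsPrimitiveRoot t (2 * h + 1)) :
    IsPrimitiveRoot (t ^ 2) (2 * h + 1) :=
  ht.pow_of_coprime 2 (by simp)

lemma pow_eq_inv_pow (ht : IsPrimitiveRoot t (2 * h + 1)) {i j : ℕ} (m : ℕ)
    (hij : i + j = m * (2 * h + 1)) : t ^ i = (t ^ j)⁻¹ :=
  eq_inv_of_mul_eq_one_left (by rw [← pow_add, hij, mul_comm, pow_mul, ht.pow_eq_one, one_pow])

lemma pochRatio_eq_zero (ht : IsPrimitiveRoot t (2 * h + 1)) {k : ℕ} (hk : h < k) :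
    pochRatio t k = 0 :=
  prod_eq_zero (mem_range.mpr hk) (by rw [ht.pow_eq_one, sub_self, zero_div])

lemma pochRatio_succ (t : F) (k : ℕ) :
    pochRatio t (k + 1) = pochRatio t k * ((1 - t ^ (2 * k + 1)) / (1 - t ^ (2 * k + 2))) :=
  prod_range_succ ..

lemma pochRatio_reflect (ht : IsPrimitiveRoot t (2 * h + 1)) {k : ℕ} (hk : k ≤ h) :
    pochRatio t (h - k) = t ^ k * pochRatio t h * pochRatio t k := by
  have ht0 : t ≠ 0 := ht.ne_zero (by lia)
  induction k with
  | zero => simp [pochRatio]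
  | succ k ih =>
    obtain ⟨i, rfl⟩ : ∃ i, h = k + i + 1 := ⟨h - k - 1, by lia⟩
    have hne {m : ℕ} (hm : 0 < m) (hm' : m < 2 * (k + i + 1) + 1) : 1 - t ^ m ≠ 0 :=
      sub_ne_zero.mpr (ht.pow_ne_one_of_pos_of_lt hm.ne' hm').symm
    have hratio : (1 - t ^ (2 * i + 1)) / (1 - t ^ (2 * i + 2)) *
        (t * ((1 - t ^ (2 * k + 1)) / (1 - t ^ (2 * k + 2)))) = 1 := by
      have hodd := pow_eq_inv_pow ht (i := 2 * i + 1) (j := 2 * k + 2) 1 (by ring)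
      have hk₂ := hne (m := 2 * k + 2) (by lia) (by lia)
      have hi₂ := hne (m := 2 * i + 2) (by lia) (by lia)
      have heven := pow_eq_inv_pow ht (i := 2 * i + 2) (j := 2 * k + 1) 1 (by ring)
      rw [div_mul_eq_mul_div, div_eq_one_iff_eq hi₂, hodd, heven]
      field_simp
      ring
    have ih := ih (by lia)
    rw [show k + i + 1 - k = i + 1 by lia, pochRatio_succ] at ih
    rw [show k + i + 1 - (k + 1) = i by lia, pochRatio_succ t k]
    linear_combination t * ((1 - t ^ (2 * k + 1)) / (1 - t ^ (2 * k + 2))) * ih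
      - pochRatio t i * hratio

lemma koebeSum_reflect_add (ht : IsPrimitiveRoot t (2 * h + 1)) {k : ℕ} (hk : k ≤ h) :
    koebeSum t (h - k) = koebeSum t h + koebeSum t k := by
  have ht0 : t ≠ 0 := ht.ne_zero (by lia)
  induction k with
  | zero => simp [koebeSum]
  | succ k ih =>
    obtain ⟨i, rfl⟩ : ∃ i, h = k + i + 1 := ⟨h - k - 1, by lia⟩
    have hodd : koebe (t ^ (2 * i + 1)) = koebe (t ^ (2 * k + 2)) := by
      rw [pow_eq_inv_pow ht 1 (by ring : _ + (2 * k + 2) = _), koebe_inv (pow_ne_zero _ ht0)]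
    have heven : koebe (t ^ (2 * i + 2)) = koebe (t ^ (2 * k + 1)) := by
      rw [pow_eq_inv_pow ht 1 (by ring : _ + (2 * k + 1) = _), koebe_inv (pow_ne_zero _ ht0)]
    have ih := ih (by lia)
    rw [show k + i + 1 - k = i + 1 by lia, koebeSum, sum_range_succ, ← koebeSum] at ih
    rw [show k + i + 1 - (k + 1) = i by lia, koebeSum.eq_def t (k + 1), sum_range_succ, ← koebeSum]
    linear_combination ih - hodd + heven

lemma koebeSum_reflect [NeZero (2 : F)] (ht : IsPrimitiveRoot t (2 * h + 1)) {k : ℕ} (hk : k ≤ h) :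
    koebeSum t (h - k) = koebeSum t k := by
  have hzero : koebeSum t h = 0 := by
    have h2 := koebeSum_reflect_add ht le_rfl
    rw [Nat.sub_self, ← two_mul] at h2
    exact (mul_eq_zero.mp (h2.symm.trans (by simp [koebeSum]))).resolve_left two_ne_zero
  rw [koebeSum_reflect_add ht hk, hzero, zero_add]

lemma pow_mul_pochRatio_half (ht : IsPrimitiveRoot t (2 * h + 1)) :
    t ^ (h * (h + 1)) * pochRatio t h = (-1) ^ h := by
  have ht0 : t ≠ 0 := ht.ne_zero (by lia)
  have hexp (h : ℕ) : ∑ j ∈ range h, (2 * j + 2) = h * (h + 1) := by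
    induction h with
    | zero => rfl
    | succ h ih => rw [sum_range_succ, ih]; ring
  have hterm (j : ℕ) (hj : j ∈ range h) :
      t ^ (2 * j + 2) * ((1 - t ^ (2 * (h - 1 - j) + 1)) / (1 - t ^ (2 * j + 2))) = -1 := by
    have hj := mem_range.mp hj
    have hne : 1 - t ^ (2 * j + 2) ≠ 0 :=
      sub_ne_zero.mpr (ht.pow_ne_one_of_pos_of_lt (by lia) (by lia)).symm
    rw [pow_eq_inv_pow ht (i := 2 * (h - 1 - j) + 1) (j := 2 * j + 2) 1 (by lia)]
    field_simp
    ring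
  rw [pochRatio, prod_div_distrib, ← prod_range_reflect (fun j ↦ 1 - t ^ (2 * j + 1)),
    ← prod_div_distrib, ← hexp, ← prod_pow_eq_pow_sum, ← prod_mul_distrib, prod_congr rfl hterm,
    prod_const, card_range]

lemma pow_mul_pochRatio_sq_half (ht : IsPrimitiveRoot t (2 * h + 1)) :
    t ^ h * pochRatio (t ^ 2) h = (-1) ^ h := by
  rw [← pow_mul_pochRatio_half (isPrimitiveRoot_sq ht), ← pow_mul,
    show 2 * (h * (h + 1)) = (2 * h + 1) * h + h by ring, pow_add, pow_mul t, ht.pow_eq_one,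
    one_pow, one_mul]

lemma summand_reflect (ht : IsPrimitiveRoot t (2 * h + 1)) {k : ℕ} (hk : k ≤ h) :
    summand t (h - k) = -summand t k := by
  have ht0 : t ≠ 0 := ht.ne_zero (by lia)
  have hhalf : pochRatio t h ^ 4 = t := by
    have hsq := pochRatio_reflect ht le_rfl
    rw [Nat.sub_self, show pochRatio t 0 = 1 from rfl] at hsq
    have hpow : (t ^ h) ^ 2 * t = 1 := by rw [← pow_mul, ← pow_succ, mul_comm h, ht.pow_eq_one]
    linear_combination -(t * (1 + t ^ h * pochRatio t h ^ 2)) * hsq - pochRatio t h ^ 4 * hpow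
  have hsign : (-1 : F) ^ h = (-1) ^ (h - k) * (-1) ^ k := by rw [← pow_add, Nat.sub_add_cancel hk]
  have hsign_sq : ((-1) ^ (h - k) * (-1) ^ (h - k) : F) = 1 := by rw [← mul_pow]; simp
  have hpow : t ^ h = t ^ (h - k) * t ^ k := by rw [← pow_add, Nat.sub_add_cancel hk]
  have hquarter : (-1) ^ (h - k) * (t ^ (h - k) * t ^ k * pochRatio (t ^ 2) h) = (-1) ^ k := by
    rw [← hpow, pow_mul_pochRatio_sq_half ht, hsign, ← mul_assoc, hsign_sq, one_mul]
  have hnum : (t ^ k) ^ 4 * t * (1 - (t ^ (4 * k + 1))⁻¹) = -(1 - t ^ (4 * k + 1)) := by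
    field_simp
    ring
  rw [summand, summand, sumWeight, sumWeight, pochRatio_reflect ht hk,
    pochRatio_reflect (isPrimitiveRoot_sq ht) hk,
    pow_eq_inv_pow ht 2 (by lia : 4 * (h - k) + 1 + (4 * k + 1) = _)]
  linear_combination ((1 - t)⁻¹ * t ^ k * pochRatio (t ^ 2) k * pochRatio t k ^ 4) *
    ((-1) ^ (h - k) * (t ^ (h - k) * t ^ k * pochRatio (t ^ 2) h) *
        ((t ^ k) ^ 4 * (1 - (t ^ (4 * k + 1))⁻¹) * hhalf + hnum)
      - (1 - t ^ (4 * k + 1)) * hquarter)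

theorem sum_summand_half [NeZero (2 : F)] (ht : IsPrimitiveRoot t (2 * h + 1)) :
    ∑ k ∈ range (h + 1), summand t k = 0 :=
  sum_range_succ_eq_zero_of_reflect fun _ hk ↦ summand_reflect ht hk

theorem sum_summand_full [NeZero (2 : F)] (ht : IsPrimitiveRoot t (2 * h + 1)) :
    ∑ k ∈ range (2 * h + 1), summand t k = 0 := by
  rw [← sum_subset (range_subset_range.mpr (by lia : h + 1 ≤ 2 * h + 1)) fun k _ hk ↦ ?_,
    sum_summand_half ht]
  rw [summand, pochRatio_eq_zero ht (by simpa using hk), zero_pow four_ne_zero, mul_zero]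

theorem sum_summand_mul_koebeSum_sq [NeZero (2 : F)] (ht : IsPrimitiveRoot t (2 * h + 1)) :
    ∑ k ∈ range (h + 1), summand t k * koebeSum t k ^ 2 = 0 :=
  sum_range_succ_eq_zero_of_reflect fun _ hk ↦ by
    rw [summand_reflect ht hk, koebeSum_reflect ht hk, neg_mul]

end RootsOfUnity

section RootOfUnityPlace

variable {K Γ₀ : Type*} [Field K] [LinearOrderedCommGroupWithZero Γ₀]

/-- The place of `v` sends `t` to a primitive `d`-th root of unity in a residue field of
characteristic zero, but `t` itself is not a root of unity. -/
structure IsRootOfUnityPlace (v : Valuation K Γ₀) (t : K) (d : ℕ) : Prop where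
  pow_ne_one : t ^ d ≠ 1
  map_one_sub_pow_lt_one : v (1 - t ^ d) < 1
  map_one_sub_pow_of_not_dvd {m : ℕ} : ¬ d ∣ m → v (1 - t ^ m) = 1
  map_natCast {m : ℕ} : 0 < m → v (m : K) = 1

variable {v : Valuation K Γ₀} {t : K} {d h : ℕ}

namespace IsRootOfUnityPlace

lemma map_eq_one (hv : IsRootOfUnityPlace v t d) (hd : 0 < d) : v t = 1 := by
  have hpow : v t ^ d = 1 := by
    rw [← map_pow, ← sub_sub_cancel 1 (t ^ d), v.map_one_sub_of_lt hv.map_one_sub_pow_lt_one]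
  exact (pow_eq_one_iff_of_nonneg zero_le hd.ne').mp hpow

lemma map_one_sub (hv : IsRootOfUnityPlace v t (2 * h + 1)) (hh : 0 < h) : v (1 - t) = 1 := by
  simpa using hv.map_one_sub_pow_of_not_dvd (m := 1) (by simp; lia)

lemma map_one_sub_pow_of_dvd (hv : IsRootOfUnityPlace v t d) {m : ℕ} (hm : 0 < m) (hdm : d ∣ m) :
    v (1 - t ^ m) = v (1 - t ^ d) := by
  obtain ⟨l, rfl⟩ := hdm
  have hl : 0 < l := Nat.pos_of_mul_pos_left hm
  have hd : 0 < d := Nat.pos_of_mul_pos_right hm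
  have hgeom : v (∑ i ∈ range l, (t ^ d) ^ i) = 1 := by
    have hsum : ∑ i ∈ range l, (t ^ d) ^ i = l - ∑ i ∈ range l, (1 - (t ^ d) ^ i) := by
      simp
    have hlt : v (∑ i ∈ range l, (1 - (t ^ d) ^ i)) < 1 := by
      refine v.map_sum_lt one_ne_zero fun i _ ↦ ?_
      rw [← mul_neg_geom_sum, map_mul]
      refine mul_lt_one_of_lt_of_le hv.map_one_sub_pow_lt_one (v.map_sum_le fun j _ ↦ ?_)
      simp [hv.map_eq_one hd]
    rw [hsum, v.map_sub_eq_of_lt_left (by rwa [hv.map_natCast hl]), hv.map_natCast hl]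
  rw [pow_mul, ← mul_neg_geom_sum, map_mul, hgeom, mul_one]

lemma map_one_sub_pow_congr (hv : IsRootOfUnityPlace v t d) {i j : ℕ} (hi : 0 < i) (hj : 0 < j)
    (hij : i ≡ j [MOD d]) : v (1 - t ^ i) = v (1 - t ^ j) := by
  by_cases hdi : d ∣ i
  · rw [hv.map_one_sub_pow_of_dvd hi hdi,
      hv.map_one_sub_pow_of_dvd hj ((hij.dvd_iff dvd_rfl).mp hdi)]
  · rw [hv.map_one_sub_pow_of_not_dvd hdi,
      hv.map_one_sub_pow_of_not_dvd fun hdj ↦ hdi ((hij.dvd_iff dvd_rfl).mpr hdj)]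

lemma map_one_sub_pow_ne_zero (hv : IsRootOfUnityPlace v t d) {m : ℕ} (hm : 0 < m) :
    v (1 - t ^ m) ≠ 0 := by
  by_cases hdm : d ∣ m
  · rw [hv.map_one_sub_pow_of_dvd hm hdm, v.ne_zero_iff]
    exact sub_ne_zero.mpr hv.pow_ne_one.symm
  · simp [hv.map_one_sub_pow_of_not_dvd hdm]

lemma pow_ne_one_of_pos (hv : IsRootOfUnityPlace v t d) {m : ℕ} (hm : 0 < m) : t ^ m ≠ 1 :=
  fun heq ↦ hv.map_one_sub_pow_ne_zero hm (by simp [heq])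

lemma map_one_sub_pow_le_one (hv : IsRootOfUnityPlace v t d) (hd : 0 < d) (m : ℕ) :
    v (1 - t ^ m) ≤ 1 :=
  v.map_sub_le (map_one v).le (by simp [hv.map_eq_one hd])

lemma le_map_one_sub_pow (hv : IsRootOfUnityPlace v t d) {m : ℕ} (hm : 0 < m) :
    v (1 - t ^ d) ≤ v (1 - t ^ m) := by
  by_cases hdm : d ∣ m
  · rw [hv.map_one_sub_pow_of_dvd hm hdm]
  · rw [hv.map_one_sub_pow_of_not_dvd hdm]
    exact hv.map_one_sub_pow_lt_one.le

protected lemma sq (hv : IsRootOfUnityPlace v t (2 * h + 1)) :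
    IsRootOfUnityPlace v (t ^ 2) (2 * h + 1) where
  pow_ne_one := by
    rw [← pow_mul]
    exact hv.pow_ne_one_of_pos (by lia)
  map_one_sub_pow_lt_one := by
    rw [← pow_mul, hv.map_one_sub_pow_of_dvd (by lia) (Nat.dvd_mul_left ..)]
    exact hv.map_one_sub_pow_lt_one
  map_one_sub_pow_of_not_dvd {m} hdm := by
    rw [← pow_mul]
    exact hv.map_one_sub_pow_of_not_dvd fun hd ↦
      hdm (Nat.Coprime.dvd_of_dvd_mul_left (by simp) hd)
  map_natCast := hv.map_natCast

-- Modulo `d` the numerator exponents are the denominator exponents shifted by `s` places.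
lemma map_prod_div_of_shift (hv : IsRootOfUnityPlace v t d) {a b c s m : ℕ} (hb : 0 < b)
    (hc : 0 < c) (hs : a * s + c = b + d * m) (k : ℕ) :
    v (∏ j ∈ range k, (1 - t ^ (a * j + b)) / (1 - t ^ (a * j + c))) =
      ∏ j ∈ range s, v (1 - t ^ (a * (k + j) + c)) / v (1 - t ^ (a * j + c)) := by
  have hshift (j : ℕ) : v (1 - t ^ (a * j + b)) = v (1 - t ^ (a * (s + j) + c)) := by
    refine hv.map_one_sub_pow_congr (by lia) (by lia) ?_
    rw [show a * (s + j) + c = a * j + b + d * m by linarith]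
    exact (Nat.add_mul_mod_self_left ..).symm
  have hne (n : ℕ) : ∏ j ∈ range n, v (1 - t ^ (a * j + c)) ≠ 0 :=
    prod_ne_zero_iff.mpr fun j _ ↦ hv.map_one_sub_pow_ne_zero (by lia)
  simp only [map_prod, map_div₀, prod_div_distrib, hshift]
  rw [div_eq_div_iff (hne k) (hne s), mul_comm, ← prod_range_add
    (fun j ↦ v (1 - t ^ (a * j + c))), mul_comm, ← prod_range_add
    (fun j ↦ v (1 - t ^ (a * j + c))), add_comm]

lemma map_pochRatio (hv : IsRootOfUnityPlace v t (2 * h + 1)) (k : ℕ) :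
    v (pochRatio t k) = ∏ j ∈ range h, v (1 - t ^ (2 * (k + j) + 2)) := by
  rw [pochRatio, hv.map_prod_div_of_shift one_pos two_pos (s := h) (m := 1) (by ring)]
  refine prod_congr rfl fun j hj ↦ ?_
  have hj := mem_range.mp hj
  rw [hv.map_one_sub_pow_of_not_dvd (m := 2 * j + 2), div_one]
  intro hd
  have := Nat.le_of_dvd (by lia)
    (Nat.Coprime.dvd_of_dvd_mul_left (by simp) (by rwa [mul_add_one] : 2 * h + 1 ∣ 2 * (j + 1)))
  lia

lemma map_pochRatio_le_one (hv : IsRootOfUnityPlace v t (2 * h + 1)) (k : ℕ) :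
    v (pochRatio t k) ≤ 1 := by
  rw [hv.map_pochRatio]
  exact prod_le_one' fun j _ ↦ hv.map_one_sub_pow_le_one (by lia) _

lemma map_pochRatio_le (hv : IsRootOfUnityPlace v t (2 * h + 1)) {k : ℕ} (hk : h < k)
    (hk' : k < 2 * h + 1) : v (pochRatio t k) ≤ v (1 - t ^ (2 * h + 1)) := by
  rw [hv.map_pochRatio,
    ← mul_prod_erase (range h) _ (mem_range.mpr (by lia : 2 * h - k < h)),
    show 2 * (k + (2 * h - k)) + 2 = 2 * (2 * h + 1) by lia,
    hv.map_one_sub_pow_of_dvd (by lia) (Nat.dvd_mul_left ..)]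
  exact mul_le_of_le_one_right' (prod_le_one' fun j _ ↦ hv.map_one_sub_pow_le_one (by lia) _)

lemma map_prod_three_div_five_le (hv : IsRootOfUnityPlace v t (2 * h + 1)) (k : ℕ) :
    v (∏ j ∈ range k, (1 - t ^ (4 * j + 3)) / (1 - t ^ (4 * j + 5))) ≤
      (v (1 - t ^ (2 * h + 1)))⁻¹ := by
  rw [hv.map_prod_div_of_shift three_pos (by lia) (s := h) (m := 2) (by ring), prod_div_distrib]
  have hnum : ∏ j ∈ range h, v (1 - t ^ (4 * (k + j) + 5)) ≤ 1 :=
    prod_le_one' fun j _ ↦ hv.map_one_sub_pow_le_one (by lia) _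
  have hden : v (1 - t ^ (2 * h + 1)) ≤ ∏ j ∈ range h, v (1 - t ^ (4 * j + 5)) := by
    by_cases hdvd : ∃ j ∈ range h, 2 * h + 1 ∣ 4 * j + 5
    · obtain ⟨i, hi, hdi⟩ := hdvd
      rw [prod_eq_single_of_mem i hi]
      · exact hv.le_map_one_sub_pow (by lia)
      intro j hj hij
      refine hv.map_one_sub_pow_of_not_dvd fun hdj ↦ hij ?_
      have hmod : 4 * j + 5 ≡ 4 * i + 5 [MOD 2 * h + 1] :=
        (Nat.modEq_zero_iff_dvd.mpr hdj).trans (Nat.modEq_zero_iff_dvd.mpr hdi).symm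
      have hcop : Nat.gcd (2 * h + 1) 4 = 1 :=
        Nat.Coprime.pow_right 2 (by simp : Nat.Coprime (2 * h + 1) 2)
      have := Nat.ModEq.cancel_left_of_coprime hcop (Nat.ModEq.add_right_cancel' 5 hmod)
      exact this.eq_of_lt_of_lt (by simp at hj; lia) (by simp at hi; lia)
    · push Not at hdvd
      rw [prod_congr rfl fun j hj ↦ hv.map_one_sub_pow_of_not_dvd (hdvd j hj), prod_const_one]
      exact hv.map_one_sub_pow_lt_one.le
  calc _ ≤ 1 / v (1 - t ^ (2 * h + 1)) :=
        div_le_div₀ zero_le hnum (zero_lt_iff.mpr (hv.map_one_sub_pow_ne_zero (by lia))) hden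
    _ = _ := one_div _

end IsRootOfUnityPlace

end RootOfUnityPlace

section ResidueGraph

variable {K Γ₀ : Type*} [Field K] [LinearOrderedCommGroupWithZero Γ₀]

/-- The graph of the residue map of `v`, as a subring of the product of `K` with the residue
field. It transports rational expressions to the residue field without elements of the valuation
subring having to be bundled with their integrality proofs. -/
noncomputable def residueGraph (v : Valuation K Γ₀) :
    Subring (K × IsLocalRing.ResidueField v.valuationSubring) :=
  (v.valuationSubring.toSubring.subtype.prod (IsLocalRing.residue v.valuationSubring)).range

variable {v : Valuation K Γ₀} {f g : K} {x y : IsLocalRing.ResidueField v.valuationSubring}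

lemma exists_mem_residueGraph (hf : v f ≤ 1) : ∃ x, (f, x) ∈ residueGraph v :=
  ⟨_, ⟨f, hf⟩, rfl⟩

lemma eq_zero_iff_map_lt_one (hf : (f, x) ∈ residueGraph v) : x = 0 ↔ v f < 1 := by
  obtain ⟨a : v.valuationSubring, ha⟩ := hf
  obtain ⟨rfl, rfl⟩ := Prod.mk.inj ha
  exact (IsLocalRing.residue_eq_zero_iff a).trans v.mem_maximalIdeal_iff

lemma inv_mem_residueGraph (hf : (f, x) ∈ residueGraph v) (hone : v f = 1) :
    (f⁻¹, x⁻¹) ∈ residueGraph v := by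
  obtain ⟨y, hy⟩ := exists_mem_residueGraph (v := v) (f := f⁻¹) (by simp [hone])
  have hf0 : f ≠ 0 := by rintro rfl; simp at hone
  have hxy : 1 - x * y = 0 := by
    have hmem : (1 - f * f⁻¹, 1 - x * y) ∈ residueGraph v := sub_mem (one_mem _) (mul_mem hf hy)
    rw [eq_zero_iff_map_lt_one hmem, mul_inv_cancel₀ hf0, sub_self, map_zero]
    exact zero_lt_one
  rwa [inv_eq_of_mul_eq_one_right (sub_eq_zero.mp hxy).symm]

lemma div_mem_residueGraph (hf : (f, x) ∈ residueGraph v) (hg : (g, y) ∈ residueGraph v)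
    (hone : v g = 1) : (f / g, x / y) ∈ residueGraph v := by
  rw [div_eq_mul_inv, div_eq_mul_inv]
  exact mul_mem hf (inv_mem_residueGraph hg hone)

lemma sum_mem_residueGraph {F : ℕ → K} {X : ℕ → IsLocalRing.ResidueField v.valuationSubring} {n : ℕ}
    (hF : ∀ i < n, (F i, X i) ∈ residueGraph v) :
    (∑ i ∈ range n, F i, ∑ i ∈ range n, X i) ∈ residueGraph v := by
  rw [prod_mk_sum]
  exact sum_mem fun i hi ↦ hF i (mem_range.mp hi)

lemma prod_mem_residueGraph {F : ℕ → K} {X : ℕ → IsLocalRing.ResidueField v.valuationSubring}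
    {n : ℕ} (hF : ∀ i < n, (F i, X i) ∈ residueGraph v) :
    (∏ i ∈ range n, F i, ∏ i ∈ range n, X i) ∈ residueGraph v := by
  rw [prod_mk_prod]
  exact prod_mem fun i hi ↦ hF i (mem_range.mp hi)

end ResidueGraph

section Residues

namespace IsRootOfUnityPlace

variable {K Γ₀ : Type*} [Field K] [LinearOrderedCommGroupWithZero Γ₀] {v : Valuation K Γ₀} {t : K}
  {d h : ℕ} {ζ : IsLocalRing.ResidueField v.valuationSubring}

lemma one_sub_pow_mem (hζ : (t, ζ) ∈ residueGraph v) (m : ℕ) :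
    (1 - t ^ m, 1 - ζ ^ m) ∈ residueGraph v :=
  sub_mem (one_mem _) (pow_mem hζ m)

lemma isPrimitiveRoot (hv : IsRootOfUnityPlace v t d) (hζ : (t, ζ) ∈ residueGraph v) :
    IsPrimitiveRoot ζ d where
  pow_eq_one := by
    have := (eq_zero_iff_map_lt_one (one_sub_pow_mem hζ d)).mpr hv.map_one_sub_pow_lt_one
    exact (sub_eq_zero.mp this).symm
  dvd_of_pow_eq_one m hm := by
    by_contra hdm
    have := (eq_zero_iff_map_lt_one (one_sub_pow_mem hζ m)).mp (sub_eq_zero.mpr hm.symm)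
    exact this.ne (hv.map_one_sub_pow_of_not_dvd hdm)

lemma neZero_two (hv : IsRootOfUnityPlace v t d) :
    NeZero (2 : IsLocalRing.ResidueField v.valuationSubring) where
  out h2 := by
    have hmem : (((2 : ℕ) : K), ((2 : ℕ) : IsLocalRing.ResidueField v.valuationSubring)) ∈
      residueGraph v := natCast_mem _ 2
    have := (eq_zero_iff_map_lt_one hmem).mp (by simpa using h2)
    exact this.ne (hv.map_natCast two_pos)

lemma exists_pochRatio_mem (hv : IsRootOfUnityPlace v t (2 * h + 1))
    (hζ : (t, ζ) ∈ residueGraph v) (l : ℕ) :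
    ∃ w, ∀ k < 2 * h + 1,
      (pochRatio t (l * (2 * h + 1) + k), w * pochRatio ζ k) ∈ residueGraph v := by
  have hζd := (hv.isPrimitiveRoot hζ).pow_eq_one
  obtain ⟨w, hw⟩ := exists_mem_residueGraph (hv.map_pochRatio_le_one (l * (2 * h + 1)))
  refine ⟨w, fun k hk ↦ ?_⟩
  rw [pochRatio, prod_range_add]
  refine mul_mem hw (prod_mem_residueGraph fun j hj ↦ ?_)
  have hred (m : ℕ) : (1 - t ^ (2 * (l * (2 * h + 1) + j) + m), 1 - ζ ^ (2 * j + m)) ∈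
      residueGraph v := by
    have hmem := one_sub_pow_mem hζ (2 * (l * (2 * h + 1) + j) + m)
    rwa [show 2 * (l * (2 * h + 1) + j) + m = (2 * h + 1) * (2 * l) + (2 * j + m) by ring,
      pow_add ζ, pow_mul ζ, hζd, one_pow, one_mul,
      ← show 2 * (l * (2 * h + 1) + j) + m = (2 * h + 1) * (2 * l) + (2 * j + m) by ring] at hmem
  refine div_mem_residueGraph (hred 1) (hred 2) (hv.map_one_sub_pow_of_not_dvd fun hd ↦ ?_)
  have hdvd : 2 * h + 1 ∣ 2 * (j + 1) := by
    rw [show 2 * (l * (2 * h + 1) + j) + 2 = 2 * (j + 1) + (2 * h + 1) * (2 * l) by ring] at hd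
    exact (Nat.dvd_add_left (Nat.dvd_mul_right ..)).mp hd
  have := Nat.le_of_dvd (by lia) (Nat.Coprime.dvd_of_dvd_mul_left (by simp) hdvd)
  lia

lemma exists_summand_mem (hv : IsRootOfUnityPlace v t (2 * h + 1)) (hh : 0 < h)
    (hζ : (t, ζ) ∈ residueGraph v) (l : ℕ) :
    ∃ w, ∀ k < 2 * h + 1,
      (summand t (l * (2 * h + 1) + k), w * summand ζ k) ∈ residueGraph v := by
  have hζd := (hv.isPrimitiveRoot hζ).pow_eq_one
  obtain ⟨w₁, hw₁⟩ := hv.exists_pochRatio_mem hζ l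
  have hζ₂ : (t ^ 2, ζ ^ 2) ∈ residueGraph v := pow_mem hζ 2
  obtain ⟨w₂, hw₂⟩ := hv.sq.exists_pochRatio_mem hζ₂ l
  refine ⟨(-1) ^ (l * (2 * h + 1)) * w₂ * w₁ ^ 4, fun k hk ↦ ?_⟩
  have hpow (a b : ℕ) : ζ ^ (a * (2 * h + 1) + b) = ζ ^ b := by
    rw [pow_add, mul_comm a, pow_mul, hζd, one_pow, one_mul]
  have hsign : ((-1 : K) ^ (l * (2 * h + 1) + k), (-1) ^ (l * (2 * h + 1) + k)) ∈ residueGraph v :=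
    pow_mem (neg_mem (one_mem _)) _
  have hbracket : ((1 - t ^ (4 * (l * (2 * h + 1) + k) + 1)) / (1 - t),
      (1 - ζ ^ (4 * k + 1)) / (1 - ζ)) ∈ residueGraph v := by
    have hnum := one_sub_pow_mem hζ (4 * (l * (2 * h + 1) + k) + 1)
    have hden := one_sub_pow_mem hζ 1
    rw [← hpow (4 * l) (4 * k + 1),
      show 4 * l * (2 * h + 1) + (4 * k + 1) = 4 * (l * (2 * h + 1) + k) + 1 by ring]
    rw [pow_one, pow_one] at hden
    exact div_mem_residueGraph hnum hden (hv.map_one_sub hh)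
  have hfactor : (-1) ^ (l * (2 * h + 1)) * w₂ * w₁ ^ 4 * summand ζ k =
      (-1) ^ (l * (2 * h + 1) + k) * ((1 - ζ ^ (4 * k + 1)) / (1 - ζ)) *
        (w₂ * pochRatio (ζ ^ 2) k) * ζ ^ (l * (2 * h + 1) + k) * (w₁ * pochRatio ζ k) ^ 4 := by
    rw [hpow, summand, sumWeight]
    ring
  rw [hfactor]
  exact mul_mem (mul_mem (mul_mem (mul_mem hsign hbracket) (hw₂ k hk))
    (pow_mem hζ (l * (2 * h + 1) + k))) (pow_mem (hw₁ k hk) 4)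

lemma map_sum_summand_block_lt_one (hv : IsRootOfUnityPlace v t (2 * h + 1)) (hh : 0 < h)
    (hζ : (t, ζ) ∈ residueGraph v) (l : ℕ) {r : ℕ} (hr : r ≤ 2 * h + 1)
    (hzero : ∑ k ∈ range r, summand ζ k = 0) :
    v (∑ k ∈ range r, summand t (l * (2 * h + 1) + k)) < 1 := by
  obtain ⟨w, hw⟩ := hv.exists_summand_mem hh hζ l
  rw [← eq_zero_iff_map_lt_one (sum_mem_residueGraph fun k hk ↦ hw k (hk.trans_le hr)),
    ← mul_sum, hzero, mul_zero]

lemma map_sum_summand_periods_lt_one (hv : IsRootOfUnityPlace v t (2 * h + 1)) (hh : 0 < h)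
    (l : ℕ) : v (∑ k ∈ range (l * (2 * h + 1)), summand t k) < 1 := by
  obtain ⟨ζ, hζ⟩ := exists_mem_residueGraph (hv.map_eq_one (by lia)).le
  have := hv.neZero_two
  induction l with
  | zero => simp
  | succ l ih =>
    rw [add_one_mul, sum_range_add]
    exact v.map_add_lt ih (hv.map_sum_summand_block_lt_one hh hζ l le_rfl
      (sum_summand_full (hv.isPrimitiveRoot hζ)))

lemma map_sum_summand_periods_add_half_lt_one (hv : IsRootOfUnityPlace v t (2 * h + 1))
    (hh : 0 < h) (l : ℕ) :
    v (∑ k ∈ range (l * (2 * h + 1) + (h + 1)), summand t k) < 1 := by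
  obtain ⟨ζ, hζ⟩ := exists_mem_residueGraph (hv.map_eq_one (by lia)).le
  have := hv.neZero_two
  rw [sum_range_add]
  exact v.map_add_lt (hv.map_sum_summand_periods_lt_one hh l)
    (hv.map_sum_summand_block_lt_one hh hζ l (by lia) (sum_summand_half (hv.isPrimitiveRoot hζ)))

lemma koebe_pow_mem (hv : IsRootOfUnityPlace v t d) (hζ : (t, ζ) ∈ residueGraph v) {m : ℕ}
    (hm : ¬ d ∣ m) : (koebe (t ^ m), koebe (ζ ^ m)) ∈ residueGraph v :=
  div_mem_residueGraph (pow_mem hζ m) (pow_mem (one_sub_pow_mem hζ m) 2)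
    (by rw [map_pow, hv.map_one_sub_pow_of_not_dvd hm, one_pow])

lemma koebeSum_mem (hv : IsRootOfUnityPlace v t (2 * h + 1)) (hζ : (t, ζ) ∈ residueGraph v)
    {k : ℕ} (hk : k ≤ h) : (koebeSum t k, koebeSum ζ k) ∈ residueGraph v :=
  sum_mem_residueGraph fun _ _ ↦ sub_mem
    (hv.koebe_pow_mem hζ (Nat.not_dvd_of_pos_of_lt (by lia) (by lia)))
    (hv.koebe_pow_mem hζ (Nat.not_dvd_of_pos_of_lt (by lia) (by lia)))

lemma map_sum_summand_mul_koebeSum_sq_lt_one (hv : IsRootOfUnityPlace v t (2 * h + 1))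
    (hh : 0 < h) : v (∑ k ∈ range (h + 1), summand t k * koebeSum t k ^ 2) < 1 := by
  obtain ⟨ζ, hζ⟩ := exists_mem_residueGraph (hv.map_eq_one (by lia)).le
  have := hv.neZero_two
  obtain ⟨w, hw⟩ := hv.exists_summand_mem hh hζ 0
  have hmem : (∑ k ∈ range (h + 1), summand t k * koebeSum t k ^ 2,
      ∑ k ∈ range (h + 1), w * summand ζ k * koebeSum ζ k ^ 2) ∈ residueGraph v := by
    refine sum_mem_residueGraph fun k hk ↦ ?_
    have hsummand := hw k (by lia)
    rw [zero_mul, zero_add] at hsummand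
    exact mul_mem hsummand (pow_mem (hv.koebeSum_mem hζ (by lia)) 2)
  simp only [mul_assoc, ← mul_sum] at hmem
  rw [← eq_zero_iff_map_lt_one hmem, sum_summand_mul_koebeSum_sq (hv.isPrimitiveRoot hζ), mul_zero]

end IsRootOfUnityPlace

end Residues

section Expansion

variable {K Γ₀ : Type*} [Field K] [LinearOrderedCommGroupWithZero Γ₀] {v : Valuation K Γ₀}

lemma exists_one_sub_mul_div_eq {D a b : K} (hD : v D < 1) (ha : a ∈ v.integer)
    (hb : b ∈ v.integer) :
    ∃ r ∈ v.integer, (1 - D * a) / (1 - D * b) = 1 - D * (a - b) + D ^ 2 * r := by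
  have hDb : v (D * b) < 1 := by
    rw [map_mul]
    exact mul_lt_one_of_lt_of_le hD hb
  have hone : v (1 - D * b) = 1 := v.map_one_sub_of_lt hDb
  have hne : 1 - D * b ≠ 0 := by
    rw [← v.ne_zero_iff, hone]
    exact one_ne_zero
  have hinv : (1 - D * b)⁻¹ ∈ v.integer := by simp [Valuation.mem_integer_iff, hone]
  refine ⟨-(b * (a - b) * (1 - D * b)⁻¹), neg_mem (mul_mem (mul_mem hb (sub_mem ha hb)) hinv), ?_⟩
  field_simp
  ring

lemma exists_prod_one_sub_mul_div_eq {D : K} (hD : v D < 1) {a b : ℕ → K} {k : ℕ}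
    (ha : ∀ j < k, a j ∈ v.integer) (hb : ∀ j < k, b j ∈ v.integer) :
    ∃ r ∈ v.integer, ∏ j ∈ range k, (1 - D * a j) / (1 - D * b j) =
      1 - D * ∑ j ∈ range k, (a j - b j) + D ^ 2 * r := by
  induction k with
  | zero => exact ⟨0, zero_mem _, by simp⟩
  | succ k ih =>
    obtain ⟨r, hr, hprod⟩ := ih (fun j hj ↦ ha j (by lia)) (fun j hj ↦ hb j (by lia))
    obtain ⟨s, hs, hlast⟩ := exists_one_sub_mul_div_eq hD (ha k (by lia)) (hb k (by lia))
    have hD' : D ∈ v.integer := hD.le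
    have hsum : ∑ j ∈ range k, (a j - b j) ∈ v.integer := sum_mem fun j hj ↦
      sub_mem (ha j (by simp at hj; lia)) (hb j (by simp at hj; lia))
    have hdiff : a k - b k ∈ v.integer := sub_mem (ha k (by lia)) (hb k (by lia))
    refine ⟨(1 - D * ∑ j ∈ range k, (a j - b j) + D ^ 2 * r) * s
      + (∑ j ∈ range k, (a j - b j)) * (a k - b k) + r * (1 - D * (a k - b k)), ?_, ?_⟩
    · exact add_mem (add_mem (mul_mem (add_mem (sub_mem (one_mem _) (mul_mem hD' hsum))
        (mul_mem (pow_mem hD' 2) hr)) hs) (mul_mem hsum hdiff))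
        (mul_mem hr (sub_mem (one_mem _) (mul_mem hD' hdiff)))
    · rw [prod_range_succ, sum_range_succ, hprod, hlast]
      ring

namespace IsRootOfUnityPlace

variable {t : K} {d h : ℕ}

lemma ne_zero (hv : IsRootOfUnityPlace v t d) (hd : 0 < d) : t ≠ 0 :=
  v.ne_zero_iff.mp (by simp [hv.map_eq_one hd])

lemma map_paramGap (hv : IsRootOfUnityPlace v t d) (hd : 0 < d) :
    v (paramGap t d) = v (1 - t ^ d) ^ 2 := by
  simp [paramGap, hv.map_eq_one hd]

lemma map_paramGap_lt_one (hv : IsRootOfUnityPlace v t d) (hd : 0 < d) :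
    v (paramGap t d) < 1 := by
  rw [hv.map_paramGap hd]
  exact pow_lt_one₀ zero_le hv.map_one_sub_pow_lt_one two_ne_zero

lemma koebe_pow_mem_integer (hv : IsRootOfUnityPlace v t d) (hd : 0 < d) {m : ℕ} (hm : ¬ d ∣ m) :
    koebe (t ^ m) ∈ v.integer := by
  simp [Valuation.mem_integer_iff, koebe, hv.map_one_sub_pow_of_not_dvd hm, hv.map_eq_one hd]

lemma koebeSum_mem_integer (hv : IsRootOfUnityPlace v t (2 * h + 1)) {k : ℕ} (hk : k ≤ h) :
    koebeSum t k ∈ v.integer :=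
  sum_mem fun _ hj ↦ have := mem_range.mp hj; sub_mem
    (hv.koebe_pow_mem_integer (by lia) (Nat.not_dvd_of_pos_of_lt (by lia) (by lia)))
    (hv.koebe_pow_mem_integer (by lia) (Nat.not_dvd_of_pos_of_lt (by lia) (by lia)))

lemma exists_quadRatio_two_add_eq (hv : IsRootOfUnityPlace v t (2 * h + 1)) {δ : K} (hδ : v δ < 1)
    {k : ℕ} (hk : k ≤ h) :
    ∃ r ∈ v.integer,
      quadRatio t (2 + δ) k = pochRatio t k ^ 2 * (1 - δ * koebeSum t k + δ ^ 2 * r) := by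
  obtain ⟨r, hr, hprod⟩ := exists_prod_one_sub_mul_div_eq hδ
    (a := fun j ↦ koebe (t ^ (2 * j + 1))) (b := fun j ↦ koebe (t ^ (2 * j + 2))) (k := k)
    (fun j hj ↦ hv.koebe_pow_mem_integer (by lia) (Nat.not_dvd_of_pos_of_lt (by lia) (by lia)))
    (fun j hj ↦ hv.koebe_pow_mem_integer (by lia) (Nat.not_dvd_of_pos_of_lt (by lia) (by lia)))
  exact ⟨r, hr, by rw [quadRatio_two_add (fun _ ↦ hv.pow_ne_one_of_pos), hprod, koebeSum]⟩

lemma map_sumWeight_le (hv : IsRootOfUnityPlace v t (2 * h + 1)) (hh : 0 < h) (k : ℕ) :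
    v (sumWeight t k) ≤ v (pochRatio (t ^ 2) k) := by
  have hnum := hv.map_one_sub_pow_le_one (by lia) (4 * k + 1)
  simpa [sumWeight, hv.map_one_sub hh, hv.map_eq_one] using mul_le_of_le_one_left' hnum

lemma summand_mem_integer (hv : IsRootOfUnityPlace v t (2 * h + 1)) (hh : 0 < h) (k : ℕ) :
    summand t k ∈ v.integer := by
  have hweight : sumWeight t k ∈ v.integer :=
    (hv.map_sumWeight_le hh k).trans (hv.sq.map_pochRatio_le_one k)
  have hratio : pochRatio t k ∈ v.integer := hv.map_pochRatio_le_one k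
  exact mul_mem hweight (pow_mem hratio 4)

lemma map_summand_lt (hv : IsRootOfUnityPlace v t (2 * h + 1)) (hh : 0 < h) {k : ℕ} (hk : h < k)
    (hk' : k < 2 * h + 1) : v (summand t k) < v (1 - t ^ (2 * h + 1)) ^ 4 := by
  have hpos : 0 < v (1 - t ^ (2 * h + 1)) ^ 4 :=
    pow_pos (zero_lt_iff.mpr (hv.map_one_sub_pow_ne_zero (by lia))) 4
  have hweight : v (sumWeight t k) < 1 := by
    refine (hv.map_sumWeight_le hh k).trans_lt ?_
    exact (hv.sq.map_pochRatio_le hk hk').trans_lt hv.sq.map_one_sub_pow_lt_one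
  rw [summand, map_mul, map_pow]
  calc v (sumWeight t k) * v (pochRatio t k) ^ 4
      ≤ v (sumWeight t k) * v (1 - t ^ (2 * h + 1)) ^ 4 := by
        gcongr
        exact hv.map_pochRatio_le hk hk'
    _ < 1 * v (1 - t ^ (2 * h + 1)) ^ 4 := by gcongr
    _ = v (1 - t ^ (2 * h + 1)) ^ 4 := one_mul _

lemma map_sum_summand_tail_lt (hv : IsRootOfUnityPlace v t (2 * h + 1)) (hh : 0 < h) {M : ℕ}
    (hM : h ≤ M) (hM' : M ≤ 2 * h) :
    v (∑ k ∈ range (M + 1), summand t k - ∑ k ∈ range (h + 1), summand t k) <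
      v (1 - t ^ (2 * h + 1)) ^ 4 := by
  rw [← sum_range_add_sum_Ico _ (by lia : h + 1 ≤ M + 1), add_sub_cancel_left]
  refine v.map_sum_lt (pow_ne_zero 4 (hv.map_one_sub_pow_ne_zero (by lia))) fun k hk ↦ ?_
  have hk := mem_Ico.mp hk
  exact hv.map_summand_lt hh (by lia) (by lia)

lemma map_sum_sumWeight_mul_sub_sq_lt (hv : IsRootOfUnityPlace v t (2 * h + 1)) (hh : 0 < h) :
    v (∑ k ∈ range (h + 1), sumWeight t k *
      (quadRatio t 2 k - quadRatio t (terminatingParam t (2 * h + 1)) k) ^ 2) <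
      v (1 - t ^ (2 * h + 1)) ^ 4 := by
  have ht0 : t ≠ 0 := hv.ne_zero (by lia)
  have hδ := hv.map_paramGap_lt_one (by lia)
  rw [terminatingParam_eq ht0]
  set δ := paramGap t (2 * h + 1) with hδ_def
  choose! r hr hexp using fun k (hk : k ≤ h) ↦ hv.exists_quadRatio_two_add_eq hδ hk
  have hterm (k : ℕ) (hk : k ∈ range (h + 1)) :
      sumWeight t k * (quadRatio t 2 k - quadRatio t (2 + δ) k) ^ 2 =
        δ ^ 2 * (summand t k * koebeSum t k ^ 2 +
          δ * (summand t k * (δ * r k ^ 2 - 2 * koebeSum t k * r k))) := by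
    rw [quadRatio_two, hexp k (by simpa [Nat.lt_succ_iff] using hk), summand]
    ring
  have hδ_int : δ ∈ v.integer := hδ.le
  have herror : ∑ k ∈ range (h + 1),
      summand t k * (δ * r k ^ 2 - 2 * koebeSum t k * r k) ∈ v.integer := by
    refine sum_mem fun k hk ↦ mul_mem (hv.summand_mem_integer hh k) ?_
    have hk : k ≤ h := Nat.lt_succ_iff.mp (mem_range.mp hk)
    exact sub_mem (mul_mem hδ_int (pow_mem (hr k hk) 2))
      (mul_mem (mul_mem (ofNat_mem _ 2) (hv.koebeSum_mem_integer hk)) (hr k hk))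
  have hlt : v (∑ k ∈ range (h + 1), summand t k * koebeSum t k ^ 2 + δ * ∑ k ∈ range (h + 1),
      summand t k * (δ * r k ^ 2 - 2 * koebeSum t k * r k)) < 1 := by
    refine v.map_add_lt (hv.map_sum_summand_mul_koebeSum_sq_lt_one hh) ?_
    rw [map_mul]
    exact mul_lt_one_of_lt_of_le hδ herror
  rw [sum_congr rfl hterm, ← mul_sum, sum_add_distrib, ← mul_sum, map_mul, map_pow, hδ_def,
    hv.map_paramGap (by lia), ← pow_mul]
  exact mul_lt_of_lt_one_right
    (pow_pos (zero_lt_iff.mpr (hv.map_one_sub_pow_ne_zero (by lia))) 4) hlt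

/-- Completing the square: the sum at the parameters `(2, 2)` is determined modulo the fourth power
by the sums at `(u, 2)` and `(u, u)` with `u` terminating, both of which have a closed form. -/
lemma map_sum_summand_sub_lt (hv : IsRootOfUnityPlace v t (2 * h + 1)) (hh : 0 < h) {M : ℕ}
    (hM : h ≤ M) (hM' : M ≤ 2 * h) :
    v (∑ k ∈ range (M + 1), summand t k -
      (2 * ∑ k ∈ range (h + 1),
          sumWeight t k * quadRatio t (terminatingParam t (2 * h + 1)) k * quadRatio t 2 k -
        ∑ k ∈ range (h + 1), sumWeight t k * quadRatio t (terminatingParam t (2 * h + 1)) k *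
          quadRatio t (terminatingParam t (2 * h + 1)) k)) <
      v (1 - t ^ (2 * h + 1)) ^ 4 := by
  have hsq := v.map_add_lt (hv.map_sum_summand_tail_lt hh hM hM')
    (hv.map_sum_sumWeight_mul_sub_sq_lt hh)
  convert hsq using 2
  rw [mul_sum, ← sum_sub_distrib, sub_add, ← sum_sub_distrib]
  congr 1
  refine sum_congr rfl fun k _ ↦ ?_
  rw [summand, quadRatio_two]
  ring

lemma quadFactor_two_ne_zero (hv : IsRootOfUnityPlace v t d) {m : ℕ} (hm : 0 < m) :
    quadFactor 1 2 (t ^ m) ≠ 0 := by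
  have hne := sub_ne_zero.mpr (hv.pow_ne_one_of_pos hm).symm
  simpa using (quadFactor_two_add 0 (hv.pow_ne_one_of_pos hm)).trans_ne (by simpa using hne)

lemma map_sum_summand_even_sub_lt {l : ℕ} (hv : IsRootOfUnityPlace v t (2 * (2 * l) + 1))
    (hl : 0 < l) {M : ℕ} (hM : 2 * l ≤ M) (hM' : M ≤ 2 * (2 * l)) :
    v (∑ k ∈ range (M + 1), summand t k - (1 - t ^ (2 * (2 * l) + 1)) / (1 - t) *
      pochRatio (t ^ 2) l ^ 2 *
        (1 + paramGap t (2 * (2 * l) + 1) * koebeSum (t ^ 2) l)) <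
      v (1 - t ^ (2 * (2 * l) + 1)) ^ 4 := by
  have ht0 : t ≠ 0 := hv.ne_zero (by lia)
  have ht1 (m : ℕ) (hm : 0 < m) : t ^ m ≠ 1 := hv.pow_ne_one_of_pos hm
  have hδ := hv.map_paramGap_lt_one (by lia)
  obtain ⟨r, hr, hexp⟩ := hv.sq.exists_quadRatio_two_add_eq hδ (by lia : l ≤ 2 * l)
  have hsum := hv.map_sum_summand_sub_lt (by lia) hM hM'
  rw [sum_sumWeight_mul_quadRatio_even ht0 ht1 2 l fun j _ ↦ hv.quadFactor_two_ne_zero (by lia),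
    sum_sumWeight_mul_quadRatio_even ht0 ht1 _ l
      fun j _ ↦ quadFactor_terminatingParam_ne_zero ht0 ht1 _ j,
    quadRatio_two, terminatingParam_eq ht0, hexp] at hsum
  have herror : v ((1 - t ^ (2 * (2 * l) + 1)) / (1 - t) * pochRatio (t ^ 2) l ^ 2 *
      (paramGap t (2 * (2 * l) + 1) ^ 2 * r)) < v (1 - t ^ (2 * (2 * l) + 1)) ^ 4 := by
    have hratio := pow_le_one₀ (n := 2) zero_le (hv.sq.map_pochRatio_le_one l)
    have hfac := mul_le_mul' hratio hr
    simp only [map_mul, map_div₀, map_pow, hv.map_one_sub (by lia : 0 < 2 * l), div_one,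
      hv.map_paramGap (by lia)]
    have hpos : 0 < v (1 - t ^ (2 * (2 * l) + 1)) :=
      zero_lt_iff.mpr (hv.map_one_sub_pow_ne_zero (by lia))
    calc _ = v (1 - t ^ (2 * (2 * l) + 1)) ^ 4 * (v (1 - t ^ (2 * (2 * l) + 1)) *
          (v (pochRatio (t ^ 2) l) ^ 2 * v r)) := by
          rw [← pow_mul]
          ac_rfl
      _ < _ := mul_lt_of_lt_one_right (pow_pos hpos 4)
          (mul_lt_one_of_lt_of_le hv.map_one_sub_pow_lt_one (hfac.trans_eq (mul_one 1)))
  convert v.map_sub_lt hsum herror using 2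
  ring

lemma map_sum_summand_odd_sub_lt {l : ℕ} (hv : IsRootOfUnityPlace v t (2 * (2 * l + 1) + 1))
    {M : ℕ} (hM : 2 * l + 1 ≤ M) (hM' : M ≤ 2 * (2 * l + 1)) :
    v (∑ k ∈ range (M + 1), summand t k -
      ((1 - t ^ (2 * (2 * l + 1) + 1)) / (1 - t)) ^ 2 * (t ^ (2 * l + 1))⁻¹ *
        ∏ j ∈ range (2 * l + 1), (1 - t ^ (4 * j + 3)) / (1 - t ^ (4 * j + 5))) <
      v (1 - t ^ (2 * (2 * l + 1) + 1)) ^ 4 := by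
  have ht0 : t ≠ 0 := hv.ne_zero (by lia)
  have ht1 (m : ℕ) (hm : 0 < m) : t ^ m ≠ 1 := hv.pow_ne_one_of_pos hm
  have htwo := sum_sumWeight_mul_quadRatio_odd ht0 ht1 2 l
    fun j _ ↦ hv.quadFactor_two_ne_zero (by lia)
  have hsum := hv.map_sum_summand_sub_lt (by lia) hM hM'
  rw [htwo, sum_sumWeight_mul_quadRatio_odd_terminatingParam ht0 ht1, sub_self] at hsum
  simpa using hsum

end IsRootOfUnityPlace

end Expansion

section CyclotomicPlace

open IsDedekindDomain Polynomial WithZero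

/-- The place of `ℚ(q)` at the cyclotomic polynomial `Φ_d`. -/
noncomputable def cyclotomicPlace (d : ℕ) [NeZero d] : HeightOneSpectrum ℚ[X] where
  asIdeal := Ideal.span {cyclotomic d ℚ}
  isPrime := (Ideal.span_singleton_prime (cyclotomic_ne_zero d ℚ)).mpr
    (cyclotomic.irreducible_rat (NeZero.pos d)).prime
  ne_bot := by simp [cyclotomic_ne_zero]

variable {d n : ℕ} [NeZero d]

lemma valuation_cyclotomicPlace_eq_one_iff {p : ℚ[X]} :
    (cyclotomicPlace d).valuation (RatFunc ℚ) (algebraMap _ _ p) = 1 ↔ ¬ cyclotomic d ℚ ∣ p := by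
  rw [HeightOneSpectrum.valuation_eq_one_iff_notMem, cyclotomicPlace, Ideal.mem_span_singleton]

lemma valuation_cyclotomicPlace_le_exp_iff {p : ℚ[X]} {m : ℕ} :
    (cyclotomicPlace d).valuation (RatFunc ℚ) (algebraMap _ _ p) ≤ exp (-(m : ℤ)) ↔
      cyclotomic d ℚ ^ m ∣ p := by
  rw [HeightOneSpectrum.valuation_of_algebraMap, HeightOneSpectrum.intValuation_le_pow_iff_mem,
    cyclotomicPlace, Ideal.span_singleton_pow, Ideal.mem_span_singleton]

lemma lt_exp_neg_iff {x : ℤᵐ⁰} {m : ℕ} :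
    x < exp (-(m : ℤ)) ↔ x ≤ exp (-((m + 1 : ℕ) : ℤ)) := by
  rw [← lt_mul_exp_iff_le (exp_ne_zero), ← exp_add]
  simp

lemma valuation_cyclotomicPlace_lt_one_iff {p : ℚ[X]} :
    (cyclotomicPlace d).valuation (RatFunc ℚ) (algebraMap _ _ p) < 1 ↔ cyclotomic d ℚ ∣ p := by
  rw [HeightOneSpectrum.valuation_lt_one_iff_mem, cyclotomicPlace, Ideal.mem_span_singleton]

lemma not_cyclotomic_dvd_denom {f : RatFunc ℚ}
    (hf : (cyclotomicPlace d).valuation (RatFunc ℚ) f ≤ 1) : ¬ cyclotomic d ℚ ∣ f.denom := by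
  intro hdenom
  have hnum : ¬ cyclotomic d ℚ ∣ f.num := fun hnum ↦
    (cyclotomic.irreducible_rat (NeZero.pos d)).not_isUnit
      (f.isCoprime_num_denom.isUnit_of_dvd' hnum hdenom)
  have hlt := valuation_cyclotomicPlace_lt_one_iff.mpr hdenom
  have hpos := zero_lt_iff.mpr ((Valuation.ne_zero_iff ((cyclotomicPlace d).valuation _)).mpr
    (RatFunc.algebraMap_ne_zero f.denom_ne_zero))
  rw [← f.num_div_denom, map_div₀, valuation_cyclotomicPlace_eq_one_iff.mpr hnum] at hf
  exact hf.not_gt ((one_lt_div₀ hpos).mpr hlt)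

lemma cyclotomic_pow_dvd_num {f : RatFunc ℚ} {m : ℕ}
    (hf : (cyclotomicPlace d).valuation (RatFunc ℚ) f < exp (-(m : ℤ))) :
    cyclotomic d ℚ ^ (m + 1) ∣ f.num := by
  have hone : (exp (-(m : ℤ)) : ℤᵐ⁰) ≤ 1 := by
    rw [← exp_zero, exp_le_exp]
    lia
  have hdenom := not_cyclotomic_dvd_denom (hf.le.trans hone)
  rw [← f.num_div_denom, map_div₀, valuation_cyclotomicPlace_eq_one_iff.mpr hdenom, div_one] at hf
  exact valuation_cyclotomicPlace_le_exp_iff.mp (lt_exp_neg_iff.mp hf)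

lemma cyclotomic_not_dvd_one_sub_X_pow {m : ℕ} (hm : ¬ d ∣ m) :
    ¬ cyclotomic d ℚ ∣ 1 - X ^ m := by
  have hpos : 0 < m := Nat.pos_of_ne_zero fun h ↦ hm (h ▸ dvd_zero d)
  have hirr := cyclotomic.irreducible_rat (NeZero.pos d)
  rw [dvd_sub_comm, ← prod_cyclotomic_eq_X_pow_sub_one hpos, hirr.prime.dvd_finsetProd_iff]
  rintro ⟨e, he, hdvd⟩
  have hcoprime : IsCoprime (cyclotomic d ℚ) (cyclotomic e ℚ) :=
    cyclotomic.isCoprime_rat fun hde ↦ hm (hde ▸ Nat.dvd_of_mem_divisors he)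
  exact hirr.not_isUnit (hcoprime.isUnit_of_dvd' dvd_rfl hdvd)

lemma algebraMap_one_sub_X_pow (m : ℕ) :
    algebraMap ℚ[X] (RatFunc ℚ) (1 - X ^ m) = 1 - q ^ m := by
  simp [q]

theorem isRootOfUnityPlace_cyclotomicPlace (d : ℕ) [NeZero d] :
    IsRootOfUnityPlace ((cyclotomicPlace d).valuation (RatFunc ℚ)) q d where
  pow_ne_one heq := by
    have hzero := algebraMap_one_sub_X_pow d
    rw [heq, sub_self, map_eq_zero_iff _ (RatFunc.algebraMap_injective ℚ), ← neg_eq_zero,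
      neg_sub] at hzero
    exact X_pow_sub_C_ne_zero (NeZero.pos d) 1 hzero
  map_one_sub_pow_lt_one := by
    rw [← algebraMap_one_sub_X_pow, valuation_cyclotomicPlace_lt_one_iff, dvd_sub_comm]
    exact cyclotomic.dvd_X_pow_sub_one d ℚ
  map_one_sub_pow_of_not_dvd hm := by
    rw [← algebraMap_one_sub_X_pow, valuation_cyclotomicPlace_eq_one_iff]
    exact cyclotomic_not_dvd_one_sub_X_pow hm
  map_natCast {m} hm := by
    have hunit : IsUnit (m : ℚ[X]) := by
      simpa using isUnit_C.mpr (IsUnit.mk0 (m : ℚ) (by positivity))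
    rw [← map_natCast (algebraMap ℚ[X] (RatFunc ℚ)), valuation_cyclotomicPlace_eq_one_iff]
    exact fun hdvd ↦ (cyclotomic.irreducible_rat (NeZero.pos d)).not_isUnit
      (isUnit_of_dvd_unit hdvd hunit)

lemma qcong_self (f : RatFunc ℚ) (P : ℚ[X]) : qcong f f P :=
  ⟨0, 1, isCoprime_one_left, by simp⟩

theorem qcong_of_forall_cyclotomicPlace [NeZero n] (hn : 1 < n) {f g : RatFunc ℚ} {m : ℕ}
    (hdvd : ∀ d [NeZero d], 1 < d → d ∣ n →
      (cyclotomicPlace d).valuation (RatFunc ℚ) (f - g) < 1)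
    (hlt : (cyclotomicPlace n).valuation (RatFunc ℚ) (f - g) <
      (cyclotomicPlace n).valuation (RatFunc ℚ) (1 - q ^ n) ^ m) :
    qcong f g ((∑ i ∈ range n, X ^ i) * cyclotomic n ℚ ^ m) := by
  have hmem : n ∈ n.divisors.erase 1 := by simp; lia
  have hone {d : ℕ} (hd : d ∈ n.divisors.erase 1) : 1 < d ∧ d ∣ n := by
    have hd0 := Nat.pos_of_mem_divisors (mem_of_mem_erase hd)
    have hd1 := ne_of_mem_erase hd
    exact ⟨by lia, Nat.dvd_of_mem_divisors (mem_of_mem_erase hd)⟩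
  rw [← prod_cyclotomic_eq_geom_sum (NeZero.pos n)]
  have hdenom : IsCoprime (f - g).denom (∏ d ∈ n.divisors.erase 1, cyclotomic d ℚ) := by
    refine IsCoprime.prod_right fun d hd ↦ ?_
    have : NeZero d := ⟨by have := hone hd; lia⟩
    exact ((cyclotomic.irreducible_rat (NeZero.pos d)).coprime_iff_not_dvd.mpr
      (not_cyclotomic_dvd_denom (hdvd d (hone hd).1 (hone hd).2).le)).symm
  have hnum : (∏ d ∈ n.divisors.erase 1, cyclotomic d ℚ) * cyclotomic n ℚ ^ m ∣ (f - g).num := by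
    rw [← mul_prod_erase _ _ hmem, mul_right_comm, ← pow_succ']
    refine IsCoprime.mul_dvd (IsCoprime.prod_right fun d hd ↦ ?_) ?_
      (prod_dvd_of_coprime (fun d _ e _ hde ↦ cyclotomic.isCoprime_rat hde) fun d hd ↦ ?_)
    · exact (cyclotomic.isCoprime_rat (ne_of_mem_erase hd).symm).pow_left
    · refine cyclotomic_pow_dvd_num (hlt.trans_le ?_)
      have hle := lt_exp_neg_iff (m := 0).mp
        (isRootOfUnityPlace_cyclotomicPlace n).map_one_sub_pow_lt_one
      calc _ ≤ (exp (-1 : ℤ) : ℤᵐ⁰) ^ m := by gcongr; simpa using hle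
        _ = _ := by rw [← exp_nsmul]; simp
    · have hd := hone (mem_of_mem_erase hd)
      have : NeZero d := ⟨by lia⟩
      simpa using cyclotomic_pow_dvd_num (m := 0) (by simpa using hdvd d hd.1 hd.2)
  obtain ⟨r, hr⟩ := hnum
  refine ⟨r, (f - g).denom, hdenom.mul_right (hdenom.of_isCoprime_of_dvd_right
    (dvd_prod_of_mem _ hmem)).pow_right, ?_⟩
  rw [← mul_div_assoc, ← map_mul, ← hr, RatFunc.num_div_denom]

end CyclotomicPlace

section ClosedForms

variable {K Γ₀ : Type*} [Field K] [LinearOrderedCommGroupWithZero Γ₀] {v : Valuation K Γ₀}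

namespace IsRootOfUnityPlace

variable {t : K} {h n : ℕ}

lemma map_sum_summand_lt_one (hv : IsRootOfUnityPlace v t (2 * h + 1)) (hh : 0 < h) {N M : ℕ}
    (hdvd : 2 * h + 1 ∣ 2 * N + 1) (hM : M = N ∨ M = 2 * N) :
    v (∑ k ∈ range (M + 1), summand t k) < 1 := by
  obtain ⟨c, hc⟩ := hdvd
  rcases hM with rfl | rfl
  · obtain ⟨l, rfl⟩ : Odd c := Nat.Odd.of_mul_right (m := 2 * h + 1) (hc ▸ odd_two_mul_add_one _)
    rw [show M + 1 = l * (2 * h + 1) + (h + 1) by linarith]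
    exact hv.map_sum_summand_periods_add_half_lt_one hh l
  · rw [hc, mul_comm]
    exact hv.map_sum_summand_periods_lt_one hh c

lemma map_paramGap_mul_koebeSum_sq_le_one (hv : IsRootOfUnityPlace v t (2 * h + 1)) (hn : 0 < n)
    (hdvd : 2 * h + 1 ∣ n) (k : ℕ) : v (paramGap t n * koebeSum (t ^ 2) k) ≤ 1 := by
  have hkoebe {m : ℕ} (hm : 0 < m) : v (paramGap t n * koebe ((t ^ 2) ^ m)) ≤ 1 := by
    have hle : v (1 - t ^ n) ≤ v (1 - (t ^ 2) ^ m) := by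
      rw [hv.map_one_sub_pow_of_dvd hn hdvd, ← pow_mul]
      exact hv.le_map_one_sub_pow (by lia)
    simp only [paramGap, koebe, map_mul, map_div₀, map_pow, hv.map_eq_one (by lia), one_pow,
      div_one]
    rw [mul_one_div, ← div_pow]
    exact pow_le_one₀ zero_le (div_le_one_of_le₀ hle zero_le)
  rw [koebeSum, mul_sum]
  refine v.map_sum_le fun j _ ↦ ?_
  rw [mul_sub]
  exact v.map_sub_le (hkoebe (by lia)) (hkoebe (by lia))

lemma map_closedForm_even_lt_one (hv : IsRootOfUnityPlace v t (2 * h + 1)) (hh : 0 < h)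
    (hn : 0 < n) (hdvd : 2 * h + 1 ∣ n) (l : ℕ) :
    v ((1 - t ^ n) / (1 - t) * pochRatio (t ^ 2) l ^ 2 *
      (1 + paramGap t n * koebeSum (t ^ 2) l)) < 1 := by
  have hratio := pow_le_one₀ (n := 2) zero_le (hv.sq.map_pochRatio_le_one l)
  have hgap := v.map_add_le (map_one v).le (hv.map_paramGap_mul_koebeSum_sq_le_one hn hdvd l)
  rw [map_mul, map_mul, map_div₀, map_pow, hv.map_one_sub hh, div_one,
    hv.map_one_sub_pow_of_dvd hn hdvd]
  exact mul_lt_one_of_lt_of_le (mul_lt_one_of_lt_of_le hv.map_one_sub_pow_lt_one hratio) hgap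

lemma map_closedForm_odd_lt_one (hv : IsRootOfUnityPlace v t (2 * h + 1)) (hh : 0 < h)
    (hn : 0 < n) (hdvd : 2 * h + 1 ∣ n) (l : ℕ) :
    v (((1 - t ^ n) / (1 - t)) ^ 2 * (t ^ l)⁻¹ *
      ∏ j ∈ range l, (1 - t ^ (4 * j + 3)) / (1 - t ^ (4 * j + 5))) < 1 := by
  have hne := hv.map_one_sub_pow_ne_zero (m := 2 * h + 1) (by lia)
  simp only [map_mul, map_pow, map_div₀, map_inv₀, hv.map_one_sub hh, hv.map_eq_one (by lia),
    hv.map_one_sub_pow_of_dvd hn hdvd, one_pow, inv_one, div_one, mul_one]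
  calc _ ≤ v (1 - t ^ (2 * h + 1)) ^ 2 * (v (1 - t ^ (2 * h + 1)))⁻¹ := by
        simpa using mul_le_mul_right (hv.map_prod_three_div_five_le l) _
    _ = v (1 - t ^ (2 * h + 1)) := by
        rw [sq, mul_inv_cancel_right₀ hne]
    _ < 1 := hv.map_one_sub_pow_lt_one

end IsRootOfUnityPlace

end ClosedForms

section Assembly

open Polynomial

lemma q_pow_ne_one {m : ℕ} (hm : 0 < m) : q ^ m ≠ 1 :=
  have : NeZero m := ⟨hm.ne'⟩
  (isRootOfUnityPlace_cyclotomicPlace m).pow_ne_one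

lemma qint_natCast (m : ℕ) : qint m = (1 - q ^ m) / (1 - q) := by
  rw [qint, zpow_natCast]

lemma qpoch_div_qpoch_sq (k : ℕ) : qpoch q (q ^ 2) k / qpoch (q ^ 2) (q ^ 2) k = pochRatio q k := by
  rw [qpoch, qpoch, ← prod_div_distrib]
  exact prod_congr rfl fun j _ ↦ by ring

lemma qpoch_div_qpoch_pow_four (k : ℕ) :
    qpoch (q ^ 2) (q ^ 4) k / qpoch (q ^ 4) (q ^ 4) k = pochRatio (q ^ 2) k := by
  rw [qpoch, qpoch, ← prod_div_distrib]
  exact prod_congr rfl fun j _ ↦ by ring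

lemma neg_one_pow_mul_qint_mul_eq_summand (k : ℕ) :
    (-1 : RatFunc ℚ) ^ k * qint (4 * k + 1) *
      (qpoch q (q ^ 2) k ^ 4 * qpoch (q ^ 2) (q ^ 4) k /
        (qpoch (q ^ 2) (q ^ 2) k ^ 4 * qpoch (q ^ 4) (q ^ 4) k)) * q ^ k = summand q k := by
  have hqint : qint (4 * k + 1) = (1 - q ^ (4 * k + 1)) / (1 - q) := by
    exact_mod_cast qint_natCast (4 * k + 1)
  rw [mul_div_mul_comm, ← div_pow, qpoch_div_qpoch_sq, qpoch_div_qpoch_pow_four, hqint, summand,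
    sumWeight]
  ring

lemma sum_Icc_neg_one_pow_mul {R : Type*} [CommRing R] (a : ℕ → R) (l : ℕ) :
    ∑ j ∈ Icc 1 (2 * l), (-1) ^ (j + 1) * a j = ∑ i ∈ range l, (a (2 * i + 1) - a (2 * i + 2)) := by
  induction l with
  | zero => simp
  | succ l ih =>
    rw [mul_add_one, sum_Icc_succ_top (by lia), sum_Icc_succ_top (by lia), ih, sum_range_succ]
    have hsign : (-1 : R) ^ (2 * l) = 1 := by simp
    linear_combination (a (2 * l + 1) - a (2 * l + 2)) * hsign

lemma qint_sq_mul_sum_eq (n l : ℕ) :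
    qint n ^ 2 * ∑ j ∈ Icc 1 (2 * l),
      (-1 : RatFunc ℚ) ^ (j + 1) * q ^ (2 * (j : ℤ) - n) / qint (2 * j) ^ 2 =
      paramGap q n * koebeSum (q ^ 2) l := by
  have hterm (j : ℕ) : qint n ^ 2 * ((-1) ^ (j + 1) * q ^ (2 * (j : ℤ) - n) / qint (2 * j) ^ 2) =
      paramGap q n * ((-1) ^ (j + 1) * koebe ((q ^ 2) ^ j)) := by
    have hq : 1 - q ≠ 0 := by simpa using sub_ne_zero.mpr (q_pow_ne_one one_pos).symm
    have hqint : qint (2 * j) = (1 - (q ^ 2) ^ j) / (1 - q) := by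
      rw [← pow_mul]
      exact_mod_cast qint_natCast (2 * j)
    have hpow : q ^ (2 * (j : ℤ) - n) = (q ^ 2) ^ j / q ^ n := by
      rw [zpow_sub₀ RatFunc.X_ne_zero, zpow_natCast, ← pow_mul]
      exact_mod_cast rfl
    rw [hqint, hpow, qint_natCast, paramGap, koebe]
    field_simp
  rw [mul_sum, sum_congr rfl fun j _ ↦ hterm j, ← mul_sum, sum_Icc_neg_one_pow_mul, koebeSum]

lemma qint_sq_mul_qpoch_div_qpoch_eq (n N : ℕ) :
    qint n ^ 2 * q ^ (-N : ℤ) * (qpoch (q ^ 3) (q ^ 4) N / qpoch (q ^ 5) (q ^ 4) N) =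
      ((1 - q ^ n) / (1 - q)) ^ 2 * (q ^ N)⁻¹ *
        ∏ j ∈ range N, (1 - q ^ (4 * j + 3)) / (1 - q ^ (4 * j + 5)) := by
  rw [qint_natCast, zpow_neg, zpow_natCast, qpoch, qpoch, ← prod_div_distrib]
  exact congrArg _ (prod_congr rfl fun j _ ↦ by ring)

theorem qcong_sum_summand_even (l : ℕ) {M : ℕ} (hM : M = 2 * l ∨ M = 2 * (2 * l)) :
    qcong (∑ k ∈ range (M + 1), summand q k)
      ((1 - q ^ (2 * (2 * l) + 1)) / (1 - q) * pochRatio (q ^ 2) l ^ 2 *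
        (1 + paramGap q (2 * (2 * l) + 1) * koebeSum (q ^ 2) l))
      ((∑ i ∈ range (2 * (2 * l) + 1), X ^ i) * cyclotomic (2 * (2 * l) + 1) ℚ ^ 4) := by
  obtain rfl | hl := Nat.eq_zero_or_pos l
  · obtain rfl : M = 0 := by lia
    convert qcong_self _ _ using 1
    simp [summand, sumWeight, pochRatio, koebeSum]
  refine qcong_of_forall_cyclotomicPlace (by lia) (fun d _ hd hdvd ↦ ?_)
    ((isRootOfUnityPlace_cyclotomicPlace _).map_sum_summand_even_sub_lt hl (by lia) (by lia))
  obtain ⟨h, rfl⟩ := (odd_two_mul_add_one _).of_dvd_nat hdvd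
  have hv := isRootOfUnityPlace_cyclotomicPlace (2 * h + 1)
  exact Valuation.map_sub_lt _ (hv.map_sum_summand_lt_one (by lia) hdvd hM)
    (hv.map_closedForm_even_lt_one (by lia) (by lia) hdvd l)

theorem qcong_sum_summand_odd (l : ℕ) {M : ℕ} (hM : M = 2 * l + 1 ∨ M = 2 * (2 * l + 1)) :
    qcong (∑ k ∈ range (M + 1), summand q k)
      (((1 - q ^ (2 * (2 * l + 1) + 1)) / (1 - q)) ^ 2 * (q ^ (2 * l + 1))⁻¹ *
        ∏ j ∈ range (2 * l + 1), (1 - q ^ (4 * j + 3)) / (1 - q ^ (4 * j + 5)))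
      ((∑ i ∈ range (2 * (2 * l + 1) + 1), X ^ i) *
        cyclotomic (2 * (2 * l + 1) + 1) ℚ ^ 4) := by
  refine qcong_of_forall_cyclotomicPlace (by lia) (fun d _ hd hdvd ↦ ?_)
    ((isRootOfUnityPlace_cyclotomicPlace _).map_sum_summand_odd_sub_lt (by lia) (by lia))
  obtain ⟨h, rfl⟩ := (odd_two_mul_add_one _).of_dvd_nat hdvd
  have hv := isRootOfUnityPlace_cyclotomicPlace (2 * h + 1)
  exact Valuation.map_sub_lt _ (hv.map_sum_summand_lt_one (by lia) hdvd hM)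
    (hv.map_closedForm_odd_lt_one (by lia) (by lia) hdvd _)

end Assembly

theorem stmt0 (n : ℕ) (hpos : 0 < n) (hodd : Odd n) (M : ℕ)
    (hM : M = (n - 1) / 2 ∨ M = n - 1) :
    (n % 4 = 1 →
      qcong
        (∑ k ∈ Finset.range (M + 1),
          (-1 : RatFunc ℚ) ^ k * qint (4 * k + 1) *
            (qpoch q (q ^ 2) k ^ 4 * qpoch (q ^ 2) (q ^ 4) k /
              (qpoch (q ^ 2) (q ^ 2) k ^ 4 * qpoch (q ^ 4) (q ^ 4) k)) * q ^ k)
        (qint n *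
          (qpoch (q ^ 2) (q ^ 4) ((n - 1) / 4) ^ 2 /
            qpoch (q ^ 4) (q ^ 4) ((n - 1) / 4) ^ 2) *
          (1 + qint n ^ 2 *
            ∑ j ∈ Finset.Icc 1 ((n - 1) / 2),
              (-1 : RatFunc ℚ) ^ (j + 1) * q ^ (2 * (j : ℤ) - n) / qint (2 * j) ^ 2))
        ((∑ i ∈ Finset.range n, Polynomial.X ^ i) * Polynomial.cyclotomic n ℚ ^ 4)) ∧
    (n % 4 = 3 →
      qcong
        (∑ k ∈ Finset.range (M + 1),
          (-1 : RatFunc ℚ) ^ k * qint (4 * k + 1) *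
            (qpoch q (q ^ 2) k ^ 4 * qpoch (q ^ 2) (q ^ 4) k /
              (qpoch (q ^ 2) (q ^ 2) k ^ 4 * qpoch (q ^ 4) (q ^ 4) k)) * q ^ k)
        (qint n ^ 2 * q ^ ((1 - (n : ℤ)) / 2) *
          (qpoch (q ^ 3) (q ^ 4) ((n - 1) / 2) / qpoch (q ^ 5) (q ^ 4) ((n - 1) / 2)))
        ((∑ i ∈ Finset.range n, Polynomial.X ^ i) * Polynomial.cyclotomic n ℚ ^ 4)) := by
  simp only [neg_one_pow_mul_qint_mul_eq_summand]
  refine ⟨fun hmod ↦ ?_, fun hmod ↦ ?_⟩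
  · obtain ⟨l, rfl⟩ : ∃ l, n = 2 * (2 * l) + 1 := ⟨n / 4, by lia⟩
    have hhalf : (2 * (2 * l) + 1 - 1) / 2 = 2 * l := by lia
    have hquarter : (2 * (2 * l) + 1 - 1) / 4 = l := by lia
    rw [hhalf, hquarter, qint_sq_mul_sum_eq, ← div_pow, qpoch_div_qpoch_pow_four, qint_natCast]
    exact qcong_sum_summand_even l (by lia)
  · obtain ⟨l, rfl⟩ : ∃ l, n = 2 * (2 * l + 1) + 1 := ⟨n / 4, by lia⟩
    have hhalf : (2 * (2 * l + 1) + 1 - 1) / 2 = 2 * l + 1 := by lia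
    have hexp : (1 - ((2 * (2 * l + 1) + 1 : ℕ) : ℤ)) / 2 = -((2 * l + 1 : ℕ) : ℤ) := by lia
    rw [hhalf, hexp, qint_sq_mul_qpoch_div_qpoch_eq]
    exact qcong_sum_summand_odd l (by lia)
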